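/- arXiv:0708.3938 — 9 statements merged into one kernel-verified Lean document; each statement's English description precedes it below -/
import Mathlib

section
/- Let a¹ and a² be two fixed distinct directions in ℝⁿ and let X ⊂ ℝⁿ. If the lengths of all irreducible paths in X (with respect to a¹ and a²) are uniformly bounded by some positive integer, then every function f ∈ B(X) has an extremal element in R_b(X); that is, R_b(X) is proximinal in B(X). -/
open Matrix Set Filter Topology

/-- `p 0, p 1, ..., p (m-1)` is a (finite) path whose first difference is
perpendicular to `a1`, with differences alternately perpendicular to `a1` and `a2`,
and all differences nonzero. -/
def IsPathFrom {n : ℕ} (a1 a2 : Fin n → ℝ) (m : ℕ) (p : ℕ → Fin n → ℝ) : Prop :=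
  ∀ i, i + 1 < m →
    p (i + 1) - p i ≠ 0 ∧
    (i % 2 = 0 → a1 ⬝ᵥ (p (i + 1) - p i) = 0) ∧
    (i % 2 = 1 → a2 ⬝ᵥ (p (i + 1) - p i) = 0)

/-- A finite path with respect to the directions `a1` and `a2` (the alternation may
start with either direction). -/
def IsPath {n : ℕ} (a1 a2 : Fin n → ℝ) (m : ℕ) (p : ℕ → Fin n → ℝ) : Prop :=
  IsPathFrom a1 a2 m p ∨ IsPathFrom a2 a1 m p

/-- A finite path of length `m` (i.e. with `m` points) all of whose points lie in `X`. -/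
def IsPathIn {n : ℕ} (a1 a2 : Fin n → ℝ) (X : Set (Fin n → ℝ)) (m : ℕ)
    (p : ℕ → Fin n → ℝ) : Prop :=
  1 ≤ m ∧ IsPath a1 a2 m p ∧ ∀ i < m, p i ∈ X

/-- An irreducible path in `X`: no strictly shorter path in `X` joins its endpoints. -/
def IsIrreduciblePathIn {n : ℕ} (a1 a2 : Fin n → ℝ) (X : Set (Fin n → ℝ)) (m : ℕ)
    (p : ℕ → Fin n → ℝ) : Prop :=
  IsPathIn a1 a2 X m p ∧
  ¬ ∃ l q, l < m ∧ IsPathIn a1 a2 X l q ∧ q 0 = p 0 ∧ q (l - 1) = p (m - 1)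

/-- An infinite path whose first difference is perpendicular to `a1`. -/
def IsInfPathFrom {n : ℕ} (a1 a2 : Fin n → ℝ) (p : ℕ → Fin n → ℝ) : Prop :=
  ∀ i,
    p (i + 1) - p i ≠ 0 ∧
    (i % 2 = 0 → a1 ⬝ᵥ (p (i + 1) - p i) = 0) ∧
    (i % 2 = 1 → a2 ⬝ᵥ (p (i + 1) - p i) = 0)

/-- An infinite path with respect to the directions `a1` and `a2`. -/
def IsInfPath {n : ℕ} (a1 a2 : Fin n → ℝ) (p : ℕ → Fin n → ℝ) : Prop :=
  IsInfPathFrom a1 a2 p ∨ IsInfPathFrom a2 a1 p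

/-- `f` is bounded on `X`. -/
def BddOn {n : ℕ} (f : (Fin n → ℝ) → ℝ) (X : Set (Fin n → ℝ)) : Prop :=
  ∃ M, ∀ x ∈ X, |f x| ≤ M

/-- `R_a(X)`: sums of two ridge functions with directions `a1, a2` that are bounded on `X`
(the individual summands need not be bounded). -/
def RaSet {n : ℕ} (a1 a2 : Fin n → ℝ) (X : Set (Fin n → ℝ)) : Set ((Fin n → ℝ) → ℝ) :=
  {f | (∃ g1 g2 : ℝ → ℝ, ∀ x ∈ X, f x = g1 (a1 ⬝ᵥ x) + g2 (a2 ⬝ᵥ x)) ∧ BddOn f X}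

/-- `R_b(X)`: sums of two ridge functions with directions `a1, a2` whose summands are
bounded on `X`. -/
def RbSet {n : ℕ} (a1 a2 : Fin n → ℝ) (X : Set (Fin n → ℝ)) : Set ((Fin n → ℝ) → ℝ) :=
  {f | ∃ g1 g2 : ℝ → ℝ, (∀ x ∈ X, f x = g1 (a1 ⬝ᵥ x) + g2 (a2 ⬝ᵥ x)) ∧
    BddOn (fun x => g1 (a1 ⬝ᵥ x)) X ∧ BddOn (fun x => g2 (a2 ⬝ᵥ x)) X}

/-- `R_c(X)`: sums of two ridge functions with directions `a1, a2` whose summands are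
continuous on `X`. -/
def RcSet {n : ℕ} (a1 a2 : Fin n → ℝ) (X : Set (Fin n → ℝ)) : Set ((Fin n → ℝ) → ℝ) :=
  {f | ∃ g1 g2 : ℝ → ℝ, (∀ x ∈ X, f x = g1 (a1 ⬝ᵥ x) + g2 (a2 ⬝ᵥ x)) ∧
    ContinuousOn (fun x => g1 (a1 ⬝ᵥ x)) X ∧ ContinuousOn (fun x => g2 (a2 ⬝ᵥ x)) X}

/-- The uniform (sup) distance of `f` and `g` over `X`. -/
noncomputable def supDist {n : ℕ} (X : Set (Fin n → ℝ)) (f g : (Fin n → ℝ) → ℝ) : ℝ :=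
  sSup {r | ∃ x ∈ X, r = |f x - g x|}

/-- `f` has an extremal element (best approximation in the sup norm over `X`) in `S`. -/
def HasExtremalIn {n : ℕ} (X : Set (Fin n → ℝ)) (f : (Fin n → ℝ) → ℝ)
    (S : Set ((Fin n → ℝ) → ℝ)) : Prop :=
  ∃ g0 ∈ S, supDist X f g0 = sInf ((supDist X f) '' S)

/-- The orbit of `t`: all points of `X` joined to `t` by a common path lying in `X`. -/
def Orbit {n : ℕ} (a1 a2 : Fin n → ℝ) (X : Set (Fin n → ℝ)) (t : Fin n → ℝ) :
    Set (Fin n → ℝ) :=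
  {y | ∃ m p, IsPathIn a1 a2 X m p ∧ (∃ i < m, p i = t) ∧ (∃ j < m, p j = y)}

/-- The variation of `f` on a set `Y`. -/
noncomputable def varOn {n : ℕ} (f : (Fin n → ℝ) → ℝ) (Y : Set (Fin n → ℝ)) : ℝ :=
  sSup {r | ∃ x ∈ Y, ∃ y ∈ Y, r = |f x - f y|}

def StepRel {n : ℕ} (a1 a2 : Fin n → ℝ) (X : Set (Fin n → ℝ)) (x y : X) : Prop :=
  a1 ⬝ᵥ (x : Fin n → ℝ) = a1 ⬝ᵥ (y : Fin n → ℝ) ∨ a2 ⬝ᵥ (x : Fin n → ℝ) = a2 ⬝ᵥ (y : Fin n → ℝ)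

def PathJoined {n : ℕ} (a1 a2 : Fin n → ℝ) (X : Set (Fin n → ℝ)) (x y : Fin n → ℝ) : Prop :=
  ∃ m p, IsPathIn a1 a2 X m p ∧ p 0 = x ∧ p (m - 1) = y

lemma pathFrom_update {n : ℕ} (b1 b2 : Fin n → ℝ) (k : ℕ) (p : ℕ → Fin n → ℝ) (z : Fin n → ℝ)
    (hp : IsPathFrom b1 b2 (k + 1) p) (hz : z ≠ p k)
    (h0 : k % 2 = 0 → b1 ⬝ᵥ z = b1 ⬝ᵥ p k) (h1 : k % 2 = 1 → b2 ⬝ᵥ z = b2 ⬝ᵥ p k) :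
    IsPathFrom b1 b2 (k + 2) (Function.update p (k + 1) z) := by
  intro i hi
  by_cases hik : i = k
  · subst hik
    have e : Function.update p (i + 1) z i = p i := Function.update_of_ne (by omega) _ _
    rw [e, Function.update_self]
    refine ⟨sub_ne_zero.2 hz, fun h => ?_, fun h => ?_⟩
    · rw [dotProduct_sub, h0 h, sub_self]
    · rw [dotProduct_sub, h1 h, sub_self]
  · have e : Function.update p (k + 1) z i = p i := Function.update_of_ne (by omega) _ _
    have e' : Function.update p (k + 1) z (i + 1) = p (i + 1) :=
      Function.update_of_ne (by omega) _ _
    rw [e, e']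
    exact hp i (by omega)

lemma pathFrom_mono {n : ℕ} (b1 b2 : Fin n → ℝ) (k l : ℕ) (p : ℕ → Fin n → ℝ) (h : k ≤ l)
    (hp : IsPathFrom b1 b2 l p) : IsPathFrom b1 b2 k p := fun i hi => hp i (by omega)

lemma mem_update {n : ℕ} (X : Set (Fin n → ℝ)) (k : ℕ) (p : ℕ → Fin n → ℝ) (z : Fin n → ℝ)
    (hp : ∀ i < k + 1, p i ∈ X) (hz : z ∈ X) :
    ∀ i < k + 2, Function.update p (k + 1) z i ∈ X := by
  intro i hi
  by_cases hik : i = k + 1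
  · subst hik; rwa [Function.update_self]
  · rw [Function.update_of_ne hik]; exact hp i (by omega)

/-- extension of a path with at least two points -/
lemma pathFrom_extend {n : ℕ} (b1 b2 : Fin n → ℝ) (X : Set (Fin n → ℝ)) (k : ℕ)
    (p : ℕ → Fin n → ℝ) (z : Fin n → ℝ)
    (hp : IsPathFrom b1 b2 (k + 2) p) (hX : ∀ i < k + 2, p i ∈ X) (hzX : z ∈ X)
    (hz : b1 ⬝ᵥ z = b1 ⬝ᵥ p (k + 1) ∨ b2 ⬝ᵥ z = b2 ⬝ᵥ p (k + 1)) :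
    ∃ m q, 1 ≤ m ∧ IsPathFrom b1 b2 m q ∧ (∀ i < m, q i ∈ X) ∧ q 0 = p 0 ∧ q (m - 1) = z := by
  obtain ⟨-, hk0, hk1⟩ := hp k (by omega)
  rw [dotProduct_sub, sub_eq_zero] at hk0 hk1
  by_cases hA : (k % 2 = 0 → b1 ⬝ᵥ z = b1 ⬝ᵥ p (k + 1)) ∧
      (k % 2 = 1 → b2 ⬝ᵥ z = b2 ⬝ᵥ p (k + 1))
  · by_cases hzk : z = p k
    · exact ⟨k + 1, p, by omega, pathFrom_mono _ _ _ _ _ (by omega) hp,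
        fun i hi => hX i (by omega), rfl, by simp [hzk]⟩
    · refine ⟨k + 2, Function.update p (k + 1) z, by omega,
        pathFrom_update _ _ _ _ _ (pathFrom_mono _ _ _ _ _ (by omega) hp) hzk
          (fun h => (hA.1 h).trans (hk0 h)) (fun h => (hA.2 h).trans (hk1 h)),
        mem_update _ _ _ _ (fun i hi => hX i (by omega)) hzX, ?_, ?_⟩
      · exact Function.update_of_ne (by omega) _ _
      · simp
  · by_cases hzk : z = p (k + 1)
    · exact ⟨k + 2, p, by omega, hp, hX, rfl, by simp [hzk]⟩
    · refine ⟨k + 3, Function.update p (k + 2) z, by omega,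
        pathFrom_update _ _ _ _ _ hp hzk ?_ ?_,
        mem_update _ _ _ _ hX hzX, ?_, ?_⟩
      · intro h
        rcases hz with hz | hz
        · exact hz
        · exact absurd ⟨fun h' => by omega, fun _ => hz⟩ hA
      · intro h
        rcases hz with hz | hz
        · exact absurd ⟨fun _ => hz, fun h' => by omega⟩ hA
        · exact hz
      · exact Function.update_of_ne (by omega) _ _
      · simp

lemma joined_step {n : ℕ} (a1 a2 : Fin n → ℝ) (X : Set (Fin n → ℝ)) (x y z : Fin n → ℝ)
    (h : PathJoined a1 a2 X x y) (hzX : z ∈ X)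
    (hz : a1 ⬝ᵥ z = a1 ⬝ᵥ y ∨ a2 ⬝ᵥ z = a2 ⬝ᵥ y) : PathJoined a1 a2 X x z := by
  obtain ⟨m, p, ⟨hm, hp, hX⟩, rfl, rfl⟩ := h
  obtain _ | _ | k := m
  · omega
  · simp only [zero_add, Nat.sub_self] at hz
    by_cases hzx : z = p 0
    · exact ⟨1, p, ⟨hm, hp, hX⟩, rfl, hzx.symm⟩
    · refine ⟨2, Function.update p 1 z, ⟨by omega, ?_, mem_update X 0 p z hX hzX⟩,
        Function.update_of_ne (by omega) _ _, by simp⟩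
      rcases hz with hz | hz
      · exact Or.inl (pathFrom_update _ _ 0 p z (fun i hi => by omega) hzx (fun _ => hz)
          (fun h => by omega))
      · exact Or.inr (pathFrom_update _ _ 0 p z (fun i hi => by omega) hzx (fun _ => hz)
          (fun h => by omega))
  · rcases hp with hp | hp
    · obtain ⟨m, q, h1, h2, h3, h4, h5⟩ := pathFrom_extend a1 a2 X k p z hp hX hzX hz
      exact ⟨m, q, ⟨h1, Or.inl h2, h3⟩, h4, h5⟩
    · obtain ⟨m, q, h1, h2, h3, h4, h5⟩ := pathFrom_extend a2 a1 X k p z hp hX hzX hz.symm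
      exact ⟨m, q, ⟨h1, Or.inr h2, h3⟩, h4, h5⟩

lemma joined_of_eqvGen {n : ℕ} (a1 a2 : Fin n → ℝ) (X : Set (Fin n → ℝ)) (x y : X)
    (h : Relation.EqvGen (StepRel a1 a2 X) x y) (w : Fin n → ℝ) :
    PathJoined a1 a2 X w x ↔ PathJoined a1 a2 X w y := by
  induction h with
  | rel x y h =>
    exact ⟨fun H => joined_step _ _ _ _ _ _ H y.2 (h.imp Eq.symm Eq.symm),
      fun H => joined_step _ _ _ _ _ _ H x.2 h⟩
  | refl x => rfl
  | symm x y _ ih => exact ih.symm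
  | trans x y z _ _ ih1 ih2 => exact ih1.trans ih2

lemma joined_short {n : ℕ} (a1 a2 : Fin n → ℝ) (X : Set (Fin n → ℝ)) (N : ℕ)
    (hbound : ∀ m p, IsIrreduciblePathIn a1 a2 X m p → m ≤ N) (x y : Fin n → ℝ)
    (h : PathJoined a1 a2 X x y) :
    ∃ m p, m ≤ N ∧ IsPathIn a1 a2 X m p ∧ p 0 = x ∧ p (m - 1) = y := by
  classical
  obtain ⟨p, hp, h0, h1⟩ := Nat.find_spec h
  refine ⟨Nat.find h, p, hbound _ p ⟨hp, ?_⟩, hp, h0, h1⟩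
  rintro ⟨l, q, hl, hq, hq0, hq1⟩
  exact Nat.find_min h hl ⟨q, hq, hq0.trans h0, hq1.trans h1⟩

lemma path_bound {n : ℕ} (a1 a2 : Fin n → ℝ) (X : Set (Fin n → ℝ)) (g1 g2 : ℝ → ℝ) (C : ℝ)
    (hC : ∀ x ∈ X, |g1 (a1 ⬝ᵥ x) + g2 (a2 ⬝ᵥ x)| ≤ C) (m : ℕ) (p : ℕ → Fin n → ℝ)
    (hp : IsPathIn a1 a2 X m p) (i : ℕ) (hi : i < m) :
    |g1 (a1 ⬝ᵥ p i) - g1 (a1 ⬝ᵥ p 0)| ≤ 2 * C * i := by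
  induction i with
  | zero => simp
  | succ i ih =>
    have ih := ih (by omega)
    obtain ⟨_, hp, hX⟩ := hp
    have c1 := hC _ (hX i (by omega))
    have c2 := hC _ (hX (i + 1) (by omega))
    have key : a1 ⬝ᵥ p (i + 1) = a1 ⬝ᵥ p i ∨ a2 ⬝ᵥ p (i + 1) = a2 ⬝ᵥ p i := by
      rcases hp with hp | hp <;> obtain ⟨-, h0, h1⟩ := hp i hi <;>
        rw [dotProduct_sub, sub_eq_zero] at h0 h1 <;>
        rcases Nat.mod_two_eq_zero_or_one i with h | h
      · exact Or.inl (h0 h)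
      · exact Or.inr (h1 h)
      · exact Or.inr (h0 h)
      · exact Or.inl (h1 h)
    push_cast
    rw [abs_le] at *
    rcases key with h | h
    · rw [h]; constructor <;> linarith
    · rw [h] at c2; constructor <;> linarith

/-- A bounded element of `R_b` can be rewritten with uniformly bounded summands. -/
lemma normalize_summands {n : ℕ} (a1 a2 : Fin n → ℝ) (X : Set (Fin n → ℝ)) (N : ℕ)
    (hbound : ∀ m p, IsIrreduciblePathIn a1 a2 X m p → m ≤ N)
    (g1 g2 : ℝ → ℝ) (C : ℝ) (hC0 : 0 ≤ C)
    (hC : ∀ x ∈ X, |g1 (a1 ⬝ᵥ x) + g2 (a2 ⬝ᵥ x)| ≤ C) :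
    ∃ h1 h2 : X → ℝ,
      (∀ x : X, h1 x + h2 x = g1 (a1 ⬝ᵥ (x : Fin n → ℝ)) + g2 (a2 ⬝ᵥ (x : Fin n → ℝ))) ∧
      (∀ x y : X, a1 ⬝ᵥ (x : Fin n → ℝ) = a1 ⬝ᵥ (y : Fin n → ℝ) → h1 x = h1 y) ∧
      (∀ x y : X, a2 ⬝ᵥ (x : Fin n → ℝ) = a2 ⬝ᵥ (y : Fin n → ℝ) → h2 x = h2 y) ∧
      (∀ x, |h1 x| ≤ 2 * C * N + C) ∧ (∀ x, |h2 x| ≤ 2 * C * N + C) := by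
  let rep : X → X := fun x => Quot.out (Quot.mk (StepRel a1 a2 X) x)
  have hrep : ∀ x y, StepRel a1 a2 X x y → rep x = rep y := fun x y h => by
    simp only [rep]; rw [Quot.sound h]
  have hb : ∀ x : X, |g1 (a1 ⬝ᵥ (x : Fin n → ℝ)) - g1 (a1 ⬝ᵥ (rep x : Fin n → ℝ))|
      ≤ 2 * C * N := by
    intro x
    have e : Relation.EqvGen (StepRel a1 a2 X) (rep x) x :=
      Quot.eqvGen_exact (Quot.out_eq _)
    have j0 : PathJoined a1 a2 X (rep x) (rep x) :=
      ⟨1, fun _ => rep x, ⟨le_rfl, Or.inl (fun i hi => by omega), fun _ _ => (rep x).2⟩, rfl, rfl⟩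
    have j := (joined_of_eqvGen a1 a2 X _ _ e _).1 j0
    obtain ⟨m, p, hm, hp, h0, h1⟩ := joined_short a1 a2 X N hbound _ _ j
    have := path_bound a1 a2 X g1 g2 C hC m p hp (m - 1) (by have := hp.1; omega)
    rw [h0, h1] at this
    refine this.trans ?_
    have : ((m - 1 : ℕ) : ℝ) ≤ N := by exact_mod_cast (by omega : m - 1 ≤ N)
    exact mul_le_mul_of_nonneg_left this (by linarith)
  refine ⟨fun x => g1 (a1 ⬝ᵥ (x : Fin n → ℝ)) - g1 (a1 ⬝ᵥ (rep x : Fin n → ℝ)),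
    fun x => g2 (a2 ⬝ᵥ (x : Fin n → ℝ)) + g1 (a1 ⬝ᵥ (rep x : Fin n → ℝ)), ?_, ?_, ?_, ?_, ?_⟩
  · intro x; ring
  · intro x y h
    simp only [hrep x y (Or.inl h), h]
  · intro x y h
    simp only [hrep x y (Or.inr h), h]
  · intro x
    exact (hb x).trans (by linarith)
  · intro x
    have h1 := hb x
    have h2 := hC x x.2
    rw [abs_le] at *
    constructor <;> linarith

lemma hyper_limit (D : ℝ) (u : ℕ → ℝ) (hu : ∀ k, |u k| ≤ D) :
    ∃ l, |l| ≤ D ∧ Tendsto u (hyperfilter ℕ : Filter ℕ) (𝓝 l) := by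
  obtain ⟨l, hl, h⟩ := (isCompact_Icc (a := -D) (b := D)).ultrafilter_le_nhds
    ((hyperfilter ℕ).map u) (by
      rw [le_principal_iff]
      exact Filter.mem_map.2 (Filter.univ_mem' fun k => abs_le.1 (hu k)))
  exact ⟨l, abs_le.2 hl, h⟩

/-- Theorem 1.1: if the lengths of all irreducible paths in `X`
with respect to the distinct nonzero directions `a1, a2` are uniformly bounded by a
positive integer, then every bounded function on `X` has an extremal element in
`R_b(X)`; i.e. `R_b(X)` is proximinal in `B(X)`. -/
theorem proximinality_of_Rb_of_bounded_irreducible_paths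
    {n : ℕ} (a1 a2 : Fin n → ℝ) (ha1 : a1 ≠ 0) (ha2 : a2 ≠ 0) (hne : a1 ≠ a2)
    (X : Set (Fin n → ℝ)) (N : ℕ) (hN : 0 < N)
    (hbound : ∀ m p, IsIrreduciblePathIn a1 a2 X m p → m ≤ N)
    (f : (Fin n → ℝ) → ℝ) (hf : BddOn f X) :
    HasExtremalIn X f (RbSet a1 a2 X) := by
  obtain ⟨M, hM⟩ := hf
  set S := RbSet a1 a2 X with hS
  set E := sInf ((supDist X f) '' S) with hE
  have hnn : ∀ g, 0 ≤ supDist X f g := fun g =>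
    Real.sSup_nonneg (by rintro r ⟨x, _, rfl⟩; exact abs_nonneg _)
  have hbb : BddBelow ((supDist X f) '' S) := ⟨0, by rintro _ ⟨g, _, rfl⟩; exact hnn g⟩
  have hne' : ((supDist X f) '' S).Nonempty :=
    ⟨_, fun _ => 0, ⟨fun _ => 0, fun _ => 0, by simp, ⟨0, by simp⟩, ⟨0, by simp⟩⟩, rfl⟩
  have hE0 : 0 ≤ E := le_csInf hne' (by rintro _ ⟨g, _, rfl⟩; exact hnn g)
  have hle : ∀ g ∈ S, ∀ x ∈ X, |f x - g x| ≤ supDist X f g := by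
    rintro g ⟨g1, g2, hg, ⟨M1, hM1⟩, ⟨M2, hM2⟩⟩ x hx
    refine le_csSup ⟨M + (M1 + M2), ?_⟩ ⟨x, hx, rfl⟩
    rintro r ⟨y, hy, rfl⟩
    have h1 := hM y hy
    have h2 := hM1 y hy
    have h3 := hM2 y hy
    rw [hg y hy]
    rw [abs_le] at *
    constructor <;> linarith
  set C := |M| + E + 1 with hC
  have hC0 : 0 ≤ C := by positivity
  have hseq : ∀ k : ℕ, ∃ h1 h2 : X → ℝ,
      (∀ x : X, |f x - (h1 x + h2 x)| ≤ E + 1 / ((k : ℝ) + 1)) ∧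
      (∀ x y : X, a1 ⬝ᵥ (x : Fin n → ℝ) = a1 ⬝ᵥ (y : Fin n → ℝ) → h1 x = h1 y) ∧
      (∀ x y : X, a2 ⬝ᵥ (x : Fin n → ℝ) = a2 ⬝ᵥ (y : Fin n → ℝ) → h2 x = h2 y) ∧
      (∀ x, |h1 x| ≤ 2 * C * N + C) ∧ (∀ x, |h2 x| ≤ 2 * C * N + C) := by
    intro k
    have hk : (0 : ℝ) < 1 / ((k : ℝ) + 1) := by positivity
    have hk1 : 1 / ((k : ℝ) + 1) ≤ 1 := by
      rw [div_le_one (by positivity)]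
      have : (0 : ℝ) ≤ k := by positivity
      linarith
    obtain ⟨_, ⟨g, hgS, rfl⟩, hlt⟩ := exists_lt_of_csInf_lt hne'
      (show sInf ((supDist X f) '' S) < E + 1 / ((k : ℝ) + 1) by linarith)
    have hd := hle g hgS
    obtain ⟨g1, g2, hg, -, -⟩ := hgS
    have hgC : ∀ x ∈ X, |g1 (a1 ⬝ᵥ x) + g2 (a2 ⬝ᵥ x)| ≤ C := by
      intro x hx
      have h1 := hd x hx
      have h2 := hM x hx
      have h3 := le_abs_self M
      rw [← hg x hx, hC]
      rw [abs_le] at h1 h2 ⊢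
      constructor <;> linarith
    obtain ⟨h1, h2, e, f1, f2, b1, b2⟩ := normalize_summands a1 a2 X N hbound g1 g2 C hC0 hgC
    refine ⟨h1, h2, fun x => ?_, f1, f2, b1, b2⟩
    rw [e, ← hg x x.2]
    exact (hd x x.2).trans hlt.le
  choose h1 h2 hd f1 f2 b1 b2 using hseq
  choose H1 B1 T1 using fun x : X => hyper_limit _ (fun k => h1 k x) (fun k => b1 k x)
  choose H2 B2 T2 using fun x : X => hyper_limit _ (fun k => h2 k x) (fun k => b2 k x)
  have F1 : Function.FactorsThrough H1 (fun x : X => a1 ⬝ᵥ (x : Fin n → ℝ)) := by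
    intro x y h
    refine tendsto_nhds_unique (T1 x) ?_
    simp only [f1 _ x y h]
    exact T1 y
  have F2 : Function.FactorsThrough H2 (fun x : X => a2 ⬝ᵥ (x : Fin n → ℝ)) := by
    intro x y h
    refine tendsto_nhds_unique (T2 x) ?_
    simp only [f2 _ x y h]
    exact T2 y
  have HE : ∀ x : X, |f x - (H1 x + H2 x)| ≤ E := by
    intro x
    have t1 : Tendsto (fun k => |f x - (h1 k x + h2 k x)|) (hyperfilter ℕ : Filter ℕ)
        (𝓝 |f x - (H1 x + H2 x)|) := (((T1 x).add (T2 x)).const_sub (f x)).abs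
    have t2 : Tendsto (fun k : ℕ => E + 1 / ((k : ℝ) + 1)) (hyperfilter ℕ : Filter ℕ)
        (𝓝 E) := by
      have := (tendsto_one_div_add_atTop_nhds_zero_nat (𝕜 := ℝ)).const_add E
      rw [add_zero] at this
      exact this.mono_left Nat.hyperfilter_le_atTop
    exact le_of_tendsto_of_tendsto' t1 t2 (fun k => hd k x)
  set G1 : ℝ → ℝ := Function.extend (fun x : X => a1 ⬝ᵥ (x : Fin n → ℝ)) H1 0
  set G2 : ℝ → ℝ := Function.extend (fun x : X => a2 ⬝ᵥ (x : Fin n → ℝ)) H2 0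
  have e1 : ∀ x : X, G1 (a1 ⬝ᵥ (x : Fin n → ℝ)) = H1 x := fun x => F1.extend_apply 0 x
  have e2 : ∀ x : X, G2 (a2 ⬝ᵥ (x : Fin n → ℝ)) = H2 x := fun x => F2.extend_apply 0 x
  have hmem : (fun x => G1 (a1 ⬝ᵥ x) + G2 (a2 ⬝ᵥ x)) ∈ S := by
    refine ⟨G1, G2, fun _ _ => rfl, ⟨2 * C * N + C, fun x hx => ?_⟩,
      ⟨2 * C * N + C, fun x hx => ?_⟩⟩
    · have := e1 ⟨x, hx⟩
      simp only at this ⊢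
      rw [this]; exact B1 _
    · have := e2 ⟨x, hx⟩
      simp only at this ⊢
      rw [this]; exact B2 _
  refine ⟨_, hmem, le_antisymm ?_ (csInf_le hbb ⟨_, hmem, rfl⟩)⟩
  refine Real.sSup_le ?_ hE0
  rintro r ⟨x, hx, rfl⟩
  have := HE ⟨x, hx⟩
  rw [← e1, ← e2] at this
  exact this
end

section
/- Let a¹ and a² be two fixed distinct directions in ℝⁿ and let X ⊂ ℝⁿ. If X has a cross section according to one of the directions a¹ or a², then the lengths of all irreducible paths in X (with respect to a¹ and a²) are uniformly bounded by some positive integer, and consequently R_b(X) is proximinal in B(X). -/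
open Matrix Set Filter Topology

theorem path_aux {n : ℕ} (a1 a2 : Fin n → ℝ) (X : Set (Fin n → ℝ)) (c : ℝ)
    (hc : ∀ y ∈ X, ∃ y1 ∈ X, a1 ⬝ᵥ y1 = c ∧ a2 ⬝ᵥ y = a2 ⬝ᵥ y1)
    (x y : Fin n → ℝ) (hx : x ∈ X) (hy : y ∈ X) :
    ∃ l q, l ≤ 4 ∧ IsPathIn a1 a2 X l q ∧ q 0 = x ∧ q (l - 1) = y := by
  obtain ⟨x', hx', hxc, hxx⟩ := hc x hx
  obtain ⟨y', hy', hyc, hyy⟩ := hc y hy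
  by_cases hxy : x = y
  · refine ⟨1, fun _ => x, by norm_num, ⟨le_rfl, Or.inl ?_, fun _ _ => hx⟩, rfl, hxy⟩
    intro i hi
    omega
  by_cases h2 : a2 ⬝ᵥ x = a2 ⬝ᵥ y
  · refine ⟨2, fun i => if i = 0 then x else y, by norm_num,
      ⟨by norm_num, Or.inr ?_, ?_⟩, by simp, by simp⟩
    · intro i hi
      obtain rfl : i = 0 := by omega
      simp [dotProduct_sub, sub_eq_zero, h2, Ne.symm hxy]
    · intro i hi
      dsimp only
      split_ifs <;> assumption
  have hx'y' : x' ≠ y' := by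
    rintro rfl
    exact h2 (hxx.trans hyy.symm)
  by_cases h3 : x = x'
  · by_cases h4 : y = y'
    · refine ⟨2, fun i => if i = 0 then x else y, by norm_num,
        ⟨by norm_num, Or.inl ?_, ?_⟩, by simp, by simp⟩
      · intro i hi
        obtain rfl : i = 0 := by omega
        simp [dotProduct_sub, sub_eq_zero, Ne.symm hxy]
        rw [h3, h4, hxc, hyc]
      · intro i hi
        dsimp only
        split_ifs <;> assumption
    · refine ⟨3, fun i => if i = 0 then x else if i = 1 then y' else y, by norm_num,
        ⟨by norm_num, Or.inl ?_, ?_⟩, by simp, by simp⟩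
      · intro i hi
        have : i = 0 ∨ i = 1 := by omega
        rcases this with rfl | rfl
        · simp [dotProduct_sub, sub_eq_zero]
          rw [h3, hxc, hyc]
          exact ⟨hx'y'.symm, rfl⟩
        · simp [dotProduct_sub, sub_eq_zero, h4, hyy]
      · intro i hi
        dsimp only
        split_ifs <;> assumption
  · by_cases h4 : y = y'
    · refine ⟨3, fun i => if i = 0 then x else if i = 1 then x' else y, by norm_num,
        ⟨by norm_num, Or.inr ?_, ?_⟩, by simp, by simp⟩
      · intro i hi
        have : i = 0 ∨ i = 1 := by omega
        rcases this with rfl | rfl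
        · simp [dotProduct_sub, sub_eq_zero, hxx, Ne.symm h3]
        · simp [dotProduct_sub, sub_eq_zero]
          rw [h4, hxc, hyc]
          exact ⟨hx'y'.symm, rfl⟩
      · intro i hi
        dsimp only
        split_ifs <;> assumption
    · refine ⟨4, fun i => if i = 0 then x else if i = 1 then x' else if i = 2 then y' else y,
        by norm_num, ⟨by norm_num, Or.inr ?_, ?_⟩, by simp, by simp⟩
      · intro i hi
        have : i = 0 ∨ i = 1 ∨ i = 2 := by omega
        rcases this with rfl | rfl | rfl
        · simp [dotProduct_sub, sub_eq_zero, hxx, Ne.symm h3]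
        · simp [dotProduct_sub, sub_eq_zero, hxc, hyc, hx'y'.symm]
        · simp [dotProduct_sub, sub_eq_zero, hyy, h4]
      · intro i hi
        dsimp only
        split_ifs <;> assumption

theorem bound_aux {n : ℕ} (a1 a2 : Fin n → ℝ) (X : Set (Fin n → ℝ)) (c : ℝ)
    (hc : ∀ y ∈ X, ∃ y1 ∈ X, a1 ⬝ᵥ y1 = c ∧ a2 ⬝ᵥ y = a2 ⬝ᵥ y1)
    (f : (Fin n → ℝ) → ℝ) (M : ℝ) (hM : ∀ x ∈ X, |f x| ≤ M) (E : ℝ)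
    (g1 g2 : ℝ → ℝ) (hg : ∀ x ∈ X, |f x - (g1 (a1 ⬝ᵥ x) + g2 (a2 ⬝ᵥ x))| ≤ E) :
    ∃ h1 h2 : ℝ → ℝ, (∀ t, h1 t ∈ Icc (-|2 * (M + E)|) |2 * (M + E)|) ∧
      (∀ t, h2 t ∈ Icc (-|2 * (M + E)|) |2 * (M + E)|) ∧
      ∀ x ∈ X, h1 (a1 ⬝ᵥ x) + h2 (a2 ⬝ᵥ x) = g1 (a1 ⬝ᵥ x) + g2 (a2 ⬝ᵥ x) := by
  classical
  have hsum : ∀ x ∈ X, |g1 (a1 ⬝ᵥ x) + g2 (a2 ⬝ᵥ x)| ≤ M + E := by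
    intro x hx
    have h1 := abs_le.1 (hM x hx)
    have h2 := abs_le.1 (hg x hx)
    exact abs_le.2 ⟨by linarith, by linarith⟩
  have hb2 : ∀ x ∈ X, |g2 (a2 ⬝ᵥ x) + g1 c| ≤ M + E := by
    intro x hx
    obtain ⟨y, hy, hyc, hxy⟩ := hc x hx
    have := hsum y hy
    rwa [hyc, ← hxy, add_comm] at this
  have hb1 : ∀ x ∈ X, |g1 (a1 ⬝ᵥ x) - g1 c| ≤ 2 * (M + E) := by
    intro x hx
    have h1 := abs_le.1 (hsum x hx)
    have h2 := abs_le.1 (hb2 x hx)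
    exact abs_le.2 ⟨by linarith, by linarith⟩
  refine ⟨fun t => if ∃ x ∈ X, a1 ⬝ᵥ x = t then g1 t - g1 c else 0,
    fun t => if ∃ x ∈ X, a2 ⬝ᵥ x = t then g2 t + g1 c else 0, ?_, ?_, ?_⟩
  · intro t
    dsimp only
    split_ifs with h
    · obtain ⟨x, hx, rfl⟩ := h
      exact abs_le.1 ((hb1 x hx).trans (le_abs_self _))
    · exact abs_le.1 (by simp)
  · intro t
    dsimp only
    split_ifs with h
    · obtain ⟨x, hx, rfl⟩ := h
      have h0 := (abs_nonneg _).trans (hb2 x hx)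
      exact abs_le.1 ((hb2 x hx).trans (le_trans (by linarith) (le_abs_self _)))
    · exact abs_le.1 (by simp)
  · intro x hx
    dsimp only
    rw [if_pos ⟨x, hx, rfl⟩, if_pos ⟨x, hx, rfl⟩]
    ring

theorem extremal_aux {n : ℕ} (a1 a2 : Fin n → ℝ) (X : Set (Fin n → ℝ)) (c : ℝ)
    (hc : ∀ y ∈ X, ∃ y1 ∈ X, a1 ⬝ᵥ y1 = c ∧ a2 ⬝ᵥ y = a2 ⬝ᵥ y1)
    (f : (Fin n → ℝ) → ℝ) (hf : BddOn f X) : HasExtremalIn X f (RbSet a1 a2 X) := by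
  obtain ⟨M, hM⟩ := hf
  have hnn : ∀ g, 0 ≤ supDist X f g := by
    intro g
    apply Real.sSup_nonneg
    rintro r ⟨x, _, rfl⟩
    exact abs_nonneg _
  have hbdd : BddBelow ((supDist X f) '' (RbSet a1 a2 X)) :=
    ⟨0, by rintro _ ⟨g, _, rfl⟩; exact hnn g⟩
  have hne : ((supDist X f) '' (RbSet a1 a2 X)).Nonempty :=
    ⟨_, fun _ => 0, ⟨fun _ => 0, fun _ => 0, by simp, ⟨0, by simp⟩, ⟨0, by simp⟩⟩, rfl⟩
  set E := sInf ((supDist X f) '' (RbSet a1 a2 X)) with hE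
  have hE0 : 0 ≤ E := le_csInf hne (by rintro _ ⟨g, _, rfl⟩; exact hnn g)
  have hseq : ∀ k : ℕ, ∃ h1 h2 : ℝ → ℝ,
      (∀ t, h1 t ∈ Icc (-|2 * (M + (E + 1))|) |2 * (M + (E + 1))|) ∧
      (∀ t, h2 t ∈ Icc (-|2 * (M + (E + 1))|) |2 * (M + (E + 1))|) ∧
      ∀ x ∈ X, |f x - (h1 (a1 ⬝ᵥ x) + h2 (a2 ⬝ᵥ x))| ≤ E + 1 / ((k : ℝ) + 1) := by
    intro k
    have hk : (0 : ℝ) < 1 / ((k : ℝ) + 1) := by positivity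
    obtain ⟨_, ⟨g, ⟨g1, g2, hg, ⟨M1, hM1⟩, ⟨M2, hM2⟩⟩, rfl⟩, hlt⟩ :=
      exists_lt_of_csInf_lt hne (show sInf _ < E + 1 / ((k : ℝ) + 1) by rw [← hE]; linarith)
    have key : ∀ x ∈ X, |f x - (g1 (a1 ⬝ᵥ x) + g2 (a2 ⬝ᵥ x))| ≤ E + 1 / ((k : ℝ) + 1) := by
      intro x hx
      suffices hB : BddAbove {r | ∃ x ∈ X, r = |f x - g x|} by
        rw [← hg x hx]
        exact le_trans (le_csSup hB ⟨x, hx, rfl⟩) hlt.le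
      refine ⟨M + (M1 + M2), ?_⟩
      rintro r ⟨z, hz, rfl⟩
      rw [hg z hz]
      have h1 := abs_le.1 (hM z hz)
      have h2 := abs_le.1 (hM1 z hz)
      have h3 := abs_le.1 (hM2 z hz)
      exact abs_le.2 ⟨by linarith, by linarith⟩
    have hk1 : 1 / ((k : ℝ) + 1) ≤ 1 := by
      rw [div_le_one (by positivity)]
      have : (0 : ℝ) ≤ k := Nat.cast_nonneg k
      linarith
    obtain ⟨h1, h2, hh1, hh2, hh⟩ := bound_aux a1 a2 X c hc f M hM (E + 1) g1 g2
      (fun x hx => (key x hx).trans (by linarith))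
    exact ⟨h1, h2, hh1, hh2, fun x hx => by rw [hh x hx]; exact key x hx⟩
  choose u v hu hv huv using hseq
  have lim : ∀ (w : ℕ → ℝ → ℝ) (C : ℝ), (∀ k t, w k t ∈ Icc (-C) C) →
      ∀ t, ∃ z ∈ Icc (-C) C, Tendsto (fun k => w k t) (hyperfilter ℕ) (𝓝 z) := by
    intro w C hw t
    exact isCompact_Icc.ultrafilter_le_nhds ((hyperfilter ℕ).map (fun k => w k t))
      (by
        rw [le_principal_iff]
        exact Filter.mem_map.2 (Filter.univ_mem' (fun k => hw k t)))
  choose U hU hUl using lim u _ hu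
  choose V hV hVl using lim v _ hv
  have hfin : ∀ x ∈ X, |f x - (U (a1 ⬝ᵥ x) + V (a2 ⬝ᵥ x))| ≤ E := by
    intro x hx
    have t1 : Tendsto (fun k => |f x - (u k (a1 ⬝ᵥ x) + v k (a2 ⬝ᵥ x))|) (hyperfilter ℕ)
        (𝓝 |f x - (U (a1 ⬝ᵥ x) + V (a2 ⬝ᵥ x))|) :=
      (tendsto_const_nhds.sub ((hUl _).add (hVl _))).abs
    have t2 : Tendsto (fun k : ℕ => E + 1 / ((k : ℝ) + 1)) (hyperfilter ℕ) (𝓝 (E + 0)) :=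
      (tendsto_const_nhds.add tendsto_one_div_add_atTop_nhds_zero_nat).mono_left
        Nat.hyperfilter_le_atTop
    rw [add_zero] at t2
    exact le_of_tendsto_of_tendsto' t1 t2 (fun k => huv k x hx)
  have hmem : (fun x => U (a1 ⬝ᵥ x) + V (a2 ⬝ᵥ x)) ∈ RbSet a1 a2 X :=
    ⟨U, V, fun _ _ => rfl, ⟨_, fun x _ => abs_le.2 (hU _)⟩, ⟨_, fun x _ => abs_le.2 (hV _)⟩⟩
  refine ⟨_, hmem, le_antisymm ?_ (csInf_le hbdd ⟨_, hmem, rfl⟩)⟩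
  apply Real.sSup_le _ hE0
  rintro r ⟨x, hx, rfl⟩
  exact hfin x hx

theorem main_aux {n : ℕ} (a1 a2 : Fin n → ℝ) (X : Set (Fin n → ℝ)) (c : ℝ)
    (hc : ∀ y ∈ X, ∃ y1 ∈ X, a1 ⬝ᵥ y1 = c ∧ a2 ⬝ᵥ y = a2 ⬝ᵥ y1)
    (m : ℕ) (p : ℕ → Fin n → ℝ) (h : IsIrreduciblePathIn a1 a2 X m p) : m ≤ 4 := by
  obtain ⟨⟨hm, _, hX⟩, hirr⟩ := h
  by_contra hcon
  obtain ⟨l, q, hl, hq, h0, h1⟩ :=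
    path_aux a1 a2 X c hc (p 0) (p (m - 1)) (hX _ (by omega)) (hX _ (by omega))
  exact hirr ⟨l, q, by omega, hq, h0, h1⟩

theorem isPathIn_swap {n : ℕ} (a1 a2 : Fin n → ℝ) (X : Set (Fin n → ℝ)) (m : ℕ)
    (p : ℕ → Fin n → ℝ) : IsPathIn a1 a2 X m p ↔ IsPathIn a2 a1 X m p := by
  unfold IsPathIn IsPath
  rw [or_comm]

theorem rbSet_swap {n : ℕ} (a1 a2 : Fin n → ℝ) (X : Set (Fin n → ℝ)) :
    RbSet a1 a2 X = RbSet a2 a1 X := by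
  ext f
  constructor
  · rintro ⟨g1, g2, h, hb1, hb2⟩
    exact ⟨g2, g1, fun x hx => by rw [h x hx, add_comm], hb2, hb1⟩
  · rintro ⟨g1, g2, h, hb1, hb2⟩
    exact ⟨g2, g1, fun x hx => by rw [h x hx, add_comm], hb2, hb1⟩

/-- if `X` has a cross section according to one of the directions
`a1` or `a2`, then the lengths of all irreducible paths in `X` are uniformly bounded
by some positive integer, and consequently `R_b(X)` is proximinal in `B(X)`. -/
theorem proximinality_of_Rb_of_cross_section
    {n : ℕ} (a1 a2 : Fin n → ℝ) (ha1 : a1 ≠ 0) (ha2 : a2 ≠ 0) (hne : a1 ≠ a2)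
    (X : Set (Fin n → ℝ))
    (hcross :
      (∃ c : ℝ, ∀ y ∈ X, ∃ y1 ∈ X, a1 ⬝ᵥ y1 = c ∧ a2 ⬝ᵥ y = a2 ⬝ᵥ y1) ∨
      (∃ c : ℝ, ∀ y ∈ X, ∃ y1 ∈ X, a2 ⬝ᵥ y1 = c ∧ a1 ⬝ᵥ y = a1 ⬝ᵥ y1)) :
    (∃ N : ℕ, 0 < N ∧ ∀ m p, IsIrreduciblePathIn a1 a2 X m p → m ≤ N) ∧
    (∀ f : (Fin n → ℝ) → ℝ, BddOn f X → HasExtremalIn X f (RbSet a1 a2 X)) := by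
  rcases hcross with ⟨c, hc⟩ | ⟨c, hc⟩
  · exact ⟨⟨4, by norm_num, main_aux a1 a2 X c hc⟩, extremal_aux a1 a2 X c hc⟩
  · refine ⟨⟨4, by norm_num, fun m p h => main_aux a2 a1 X c hc m p ?_⟩, ?_⟩
    · unfold IsIrreduciblePathIn at h ⊢
      simpa only [isPathIn_swap a2 a1] using h
    · rw [rbSet_swap]
      exact extremal_aux a2 a1 X c hc
end

section
/- Let a¹ = (1, −1), a² = (1, 1) in ℝ², and let X = {x⁰, x¹, x², ...} ⊂ ℝ² where x⁰ = (2, 2/3), x¹ = (2/3, −2/3), x² = (0, 0), and x^{3+k} = (Σ_{j=0}^{k} 2^{−j}, Σ_{j=0}^{k} (−1)^j 2^{−j}) for k = 0, 1, 2, .... Then the ordered set (x⁰, x¹, x², ...) is a path of infinite length with respect to a¹ and a², and xⁿ → x⁰ as n → ∞; in particular, X is compact. -/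
open Matrix Set Filter Topology

/-- The sequence of points `x⁰, x¹, x², …` of the example:
`x⁰ = (2, 2/3)`, `x¹ = (2/3, −2/3)`, `x² = (0,0)` and
`x^{3+k} = (∑_{j=0}^k 2^{−j}, ∑_{j=0}^k (−1)^j 2^{−j})`. -/
noncomputable def xseq : ℕ → (Fin 2 → ℝ)
  | 0 => ![2, 2 / 3]
  | 1 => ![2 / 3, -(2 / 3)]
  | 2 => ![0, 0]
  | (k + 3) => ![∑ j ∈ Finset.range (k + 1), (1 / 2 : ℝ) ^ j,
                 ∑ j ∈ Finset.range (k + 1), (-(1 / 2) : ℝ) ^ j]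

/-- with `a¹ = (1,−1)`, `a² = (1,1)`, the ordered set
`(x⁰, x¹, x², …)` is a path of infinite length, `xⁿ → x⁰`, and
`X = {x⁰, x¹, …}` is compact. -/
theorem xseq_is_infinite_path_tendsto_and_compact :
    IsInfPath ![(1 : ℝ), -1] ![(1 : ℝ), 1] xseq ∧
    Filter.Tendsto xseq Filter.atTop (nhds (xseq 0)) ∧
    IsCompact (Set.range xseq) := by
  have ht : Filter.Tendsto xseq Filter.atTop (nhds (xseq 0)) := by
    rw [← tendsto_add_atTop_iff_nat 3, tendsto_pi_nhds]
    intro c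
    have h1 : Tendsto (fun k : ℕ => ∑ j ∈ Finset.range (k + 1), (1 / 2 : ℝ) ^ j) atTop (𝓝 2) :=
      (hasSum_geometric_two.tendsto_sum_nat).comp (tendsto_add_atTop_nat 1)
    have h2 : Tendsto (fun k : ℕ => ∑ j ∈ Finset.range (k + 1), (-(1 / 2) : ℝ) ^ j) atTop
        (𝓝 (2 / 3)) := by
      have h := hasSum_geometric_of_abs_lt_one (r := (-(1 / 2) : ℝ))
        (by rw [abs_neg, abs_of_pos] <;> norm_num)
      have e : (1 - (-(1 / 2)) : ℝ)⁻¹ = 2 / 3 := by norm_num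
      rw [e] at h
      exact h.tendsto_sum_nat.comp (tendsto_add_atTop_nat 1)
    fin_cases c
    · simpa [xseq] using h1
    · simpa [xseq] using h2
  refine ⟨Or.inl ?_, ht, ?_⟩
  · intro i
    match i with
    | 0 =>
      refine ⟨fun h => ?_, fun _ => ?_, fun h => ?_⟩
      · have := congrFun h 0
        norm_num [xseq] at this
      · norm_num [xseq, dotProduct, Fin.sum_univ_two]
      · omega
    | 1 =>
      refine ⟨fun h => ?_, fun h => ?_, fun _ => ?_⟩
      · have := congrFun h 0
        norm_num [xseq] at this
      · omega
      · norm_num [xseq, dotProduct, Fin.sum_univ_two]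
    | 2 =>
      refine ⟨fun h => ?_, fun _ => ?_, fun h => ?_⟩
      · have := congrFun h 0
        norm_num [xseq] at this
      · norm_num [xseq, dotProduct, Fin.sum_univ_two]
      · omega
    | k + 3 =>
      have e : xseq (k + 3 + 1) - xseq (k + 3)
          = ![(1 / 2 : ℝ) ^ (k + 1), (-(1 / 2) : ℝ) ^ (k + 1)] := by
        change xseq ((k + 1) + 3) - xseq (k + 3) = _
        ext c
        fin_cases c
        · simp only [xseq, Finset.sum_range_succ _ (k + 1)]
          simp
        · simp only [xseq, Finset.sum_range_succ _ (k + 1)]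
          simp
      rw [e]
      refine ⟨fun h => ?_, fun h => ?_, fun h => ?_⟩
      · have h0 := congrFun h 0
        have : (0 : ℝ) < (1 / 2) ^ (k + 1) := by positivity
        simp only [Matrix.cons_val_zero, Pi.zero_apply] at h0
        linarith
      · have hk : Even (k + 1) := by rw [Nat.even_iff]; omega
        simp [dotProduct, Fin.sum_univ_two, hk.neg_pow]
      · have hk : Odd (k + 1) := by rw [Nat.odd_iff]; omega
        simp [dotProduct, Fin.sum_univ_two, hk.neg_pow]
  · have h := ht.isCompact_insert_range
    rwa [Set.insert_eq_of_mem (Set.mem_range_self 0)] at h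
end

section
/- Let a¹ = (1, −1), a² = (1, 1) in ℝ², let X = {x⁰, x¹, x², ...} ⊂ ℝ² where x⁰ = (2, 2/3), x¹ = (2/3, −2/3), x² = (0, 0), and x^{3+k} = (Σ_{j=0}^{k} 2^{−j}, Σ_{j=0}^{k} (−1)^j 2^{−j}) for k = 0, 1, 2, .... Let (cₙ)_{n≥1} be a sequence with cₙ > 0, cₙ → 0 and Σ_{n=1}^∞ cₙ = ∞, and let f₀ : X → ℝ be defined by f₀(x^{2n}) = 0 and f₀(x^{2n+1}) = c_{n+1} for n = 0, 1, 2, .... Then f₀ is continuous on X and inf_{g ∈ R_b(X)} ‖f₀ − g‖_{B(X)} = 0. -/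
open Matrix Set Filter Topology

theorem xseq_closed (k : ℕ) : xseq (k + 3) =
    ![2 - 2 * (1 / 2 : ℝ) ^ (k + 1), 2 / 3 - 2 / 3 * (-(1 / 2) : ℝ) ^ (k + 1)] := by
  have h1 : ∀ n : ℕ, ∑ j ∈ Finset.range n, (1 / 2 : ℝ) ^ j = 2 - 2 * (1 / 2 : ℝ) ^ n := by
    intro n
    induction n with
    | zero => simp
    | succ n ih => rw [Finset.sum_range_succ, ih]; ring
  have h2 : ∀ n : ℕ, ∑ j ∈ Finset.range n, (-(1 / 2) : ℝ) ^ j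
      = 2 / 3 - 2 / 3 * (-(1 / 2) : ℝ) ^ n := by
    intro n
    induction n with
    | zero => simp
    | succ n ih => rw [Finset.sum_range_succ, ih]; ring
  rw [xseq, h1, h2]

noncomputable def wseq : ℕ → ℝ
  | 0 => 8 / 3
  | k + 1 => 8 / 3 - 8 / 3 * (1 / 4 : ℝ) ^ k

theorem wseq_inj : Function.Injective wseq := by
  have hp : ∀ k : ℕ, 0 < (1 / 4 : ℝ) ^ k := fun k => by positivity
  intro a b h
  cases a with
  | zero =>
    cases b with
    | zero => rfl
    | succ b => simp only [wseq] at h; linarith [hp b]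
  | succ a =>
    cases b with
    | zero => simp only [wseq] at h; linarith [hp a]
    | succ b =>
      simp only [wseq] at h
      have h' : (1 / 4 : ℝ) ^ a = (1 / 4 : ℝ) ^ b := by linarith
      have := pow_right_injective₀ (by norm_num : (0 : ℝ) < 1 / 4) (by norm_num) h'
      omega

theorem xseq_even (m : ℕ) : ![(1 : ℝ), -1] ⬝ᵥ xseq (2 * m) = wseq m / 2 ∧
    ![(1 : ℝ), 1] ⬝ᵥ xseq (2 * m) = wseq m := by
  match m with
  | 0 => simp [xseq, wseq]; norm_num
  | 1 => simp [xseq, wseq]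
  | j + 2 =>
    have e : 2 * (j + 2) = (2 * j + 1) + 3 := by ring
    have e1 : (1 / 2 : ℝ) ^ (2 * j + 1 + 1) = (1 / 4) ^ (j + 1) := by
      rw [show 2 * j + 1 + 1 = 2 * (j + 1) by ring, pow_mul]; norm_num
    have e2 : (-(1 / 2) : ℝ) ^ (2 * j + 1 + 1) = (1 / 4) ^ (j + 1) := by
      rw [show 2 * j + 1 + 1 = 2 * (j + 1) by ring, pow_mul]; norm_num
    rw [e, xseq_closed, e1, e2]
    simp only [vec2_dotProduct, wseq, Matrix.cons_val_zero, Matrix.cons_val_one]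
    constructor <;> ring

theorem xseq_odd (m : ℕ) : ![(1 : ℝ), -1] ⬝ᵥ xseq (2 * m + 1) = wseq m / 2 ∧
    ![(1 : ℝ), 1] ⬝ᵥ xseq (2 * m + 1) = wseq (m + 1) := by
  match m with
  | 0 => simp [xseq, wseq]; norm_num
  | 1 => simp [xseq, wseq]; norm_num
  | j + 2 =>
    have e : 2 * (j + 2) + 1 = (2 * j + 2) + 3 := by ring
    have e1 : (1 / 2 : ℝ) ^ (2 * j + 2 + 1) = (1 / 4) ^ (j + 1) / 2 := by
      rw [pow_succ, show 2 * j + 2 = 2 * (j + 1) by ring, pow_mul]; norm_num; ring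
    have e2 : (-(1 / 2) : ℝ) ^ (2 * j + 2 + 1) = -((1 / 4) ^ (j + 1) / 2) := by
      rw [pow_succ, show 2 * j + 2 = 2 * (j + 1) by ring, pow_mul]; norm_num; ring
    rw [e, xseq_closed, e1, e2]
    simp only [vec2_dotProduct, wseq, Matrix.cons_val_zero, Matrix.cons_val_one]
    constructor <;> ring

theorem xseq_tendsto : Tendsto xseq atTop (𝓝 (xseq 0)) := by
  rw [← tendsto_add_atTop_iff_nat 3, tendsto_pi_nhds]
  have h1 : Tendsto (fun k : ℕ => (1 / 2 : ℝ) ^ (k + 1)) atTop (𝓝 0) :=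
    (tendsto_add_atTop_iff_nat 1).2
      (tendsto_pow_atTop_nhds_zero_of_abs_lt_one (by rw [abs_of_pos] <;> norm_num))
  have h2 : Tendsto (fun k : ℕ => (-(1 / 2) : ℝ) ^ (k + 1)) atTop (𝓝 0) :=
    (tendsto_add_atTop_iff_nat 1).2
      (tendsto_pow_atTop_nhds_zero_of_abs_lt_one
        (by rw [abs_neg, abs_of_pos] <;> norm_num))
  intro i
  simp only [xseq_closed]
  fin_cases i
  · simpa [xseq] using (h1.const_mul 2).const_sub 2
  · simpa [xseq] using (h2.const_mul (2 / 3)).const_sub (2 / 3)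

theorem f0_seq_tendsto (c : ℕ → ℝ) (hlim : Tendsto c atTop (𝓝 0))
    (f0 : (Fin 2 → ℝ) → ℝ)
    (hf0even : ∀ m : ℕ, f0 (xseq (2 * m)) = 0)
    (hf0odd : ∀ m : ℕ, f0 (xseq (2 * m + 1)) = c (m + 1)) :
    ∀ ε > 0, ∃ N, ∀ k ≥ N, |f0 (xseq k)| < ε := by
  intro ε hε
  obtain ⟨N, hN⟩ := Metric.tendsto_atTop.1 hlim ε hε
  refine ⟨2 * N, fun k hk => ?_⟩
  obtain ⟨m, rfl | rfl⟩ := Nat.even_or_odd' k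
  · rw [hf0even]; simpa using hε
  · rw [hf0odd]
    simpa [Real.dist_eq] using hN (m + 1) (by omega)

theorem f0_cont (f0 : (Fin 2 → ℝ) → ℝ) (h0 : f0 (xseq 0) = 0)
    (h : ∀ ε > 0, ∃ N, ∀ k ≥ N, |f0 (xseq k)| < ε) :
    ContinuousOn f0 (Set.range xseq) := by
  rintro x ⟨n, rfl⟩
  rw [ContinuousWithinAt, Metric.tendsto_nhds]
  intro ε hε
  rw [eventually_nhdsWithin_iff]
  have key : ∃ N, ∀ᶠ y in 𝓝 (xseq n), ∀ k ≥ N, y = xseq k → dist (f0 y) (f0 (xseq n)) < ε := by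
    by_cases hn : xseq n = xseq 0
    · obtain ⟨N, hN⟩ := h ε hε
      refine ⟨N, Eventually.of_forall ?_⟩
      rintro y k hk rfl
      rw [hn, h0]
      simpa [Real.dist_eq] using hN k hk
    · obtain ⟨U, V, hU, hV, hxU, hxV, hUV⟩ := t2_separation hn
      obtain ⟨N, hN⟩ := eventually_atTop.1 (xseq_tendsto.eventually (hV.mem_nhds hxV))
      refine ⟨N, ?_⟩
      filter_upwards [hU.mem_nhds hxU] with y hy k hk hyk
      exact absurd (hyk ▸ hN k hk) (Set.disjoint_left.1 hUV hy)
  obtain ⟨N, hN⟩ := key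
  have hfin : ∀ᶠ y in 𝓝 (xseq n), ∀ k ∈ Finset.range N,
      y = xseq k → dist (f0 y) (f0 (xseq n)) < ε := by
    rw [Filter.eventually_all_finset]
    intro k _
    by_cases hk : xseq n = xseq k
    · refine Eventually.of_forall ?_
      rintro y rfl
      simpa [hk] using hε
    · filter_upwards [isOpen_ne.mem_nhds hk] with y hy hyk
      exact absurd hyk hy
  filter_upwards [hN, hfin] with y h1 h2
  rintro ⟨k, rfl⟩
  by_cases hk : k < N
  · exact h2 k (Finset.mem_range.2 hk) rfl
  · exact h1 k (not_lt.1 hk) rfl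

theorem exists_approx (c : ℕ → ℝ) (hlim : Tendsto c atTop (𝓝 0))
    (f0 : (Fin 2 → ℝ) → ℝ)
    (hf0even : ∀ m : ℕ, f0 (xseq (2 * m)) = 0)
    (hf0odd : ∀ m : ℕ, f0 (xseq (2 * m + 1)) = c (m + 1)) (ε : ℝ) (hε : 0 < ε) :
    ∃ g ∈ RbSet ![(1 : ℝ), -1] ![(1 : ℝ), 1] (Set.range xseq),
      supDist (Set.range xseq) f0 g ≤ ε := by
  obtain ⟨N, hN⟩ := Metric.tendsto_atTop.1 hlim ε hε
  let B : ℕ → ℝ := fun k => ∑ i ∈ Finset.range (min k N), c (i + 1)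
  let G : ℝ → ℝ := Function.extend wseq B 0
  have hG : ∀ k, G (wseq k) = B k := fun k => wseq_inj.extend_apply _ _ _
  have hB : ∀ k, |B k| ≤ ∑ i ∈ Finset.range N, |c (i + 1)| := fun k =>
    (Finset.abs_sum_le_sum_abs _ _).trans
      (Finset.sum_le_sum_of_subset_of_nonneg
        (Finset.range_subset_range.2 (min_le_right _ _)) (fun _ _ _ => abs_nonneg _))
  have h2 : ∀ t : ℝ, 2 * (t / 2) = t := fun t => by ring
  refine ⟨fun x => -G (2 * (![(1 : ℝ), -1] ⬝ᵥ x)) + G (![(1 : ℝ), 1] ⬝ᵥ x),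
    ⟨fun t => -G (2 * t), G, fun x _ => rfl, ⟨∑ i ∈ Finset.range N, |c (i + 1)|, ?_⟩,
      ⟨∑ i ∈ Finset.range N, |c (i + 1)|, ?_⟩⟩, ?_⟩
  · rintro x ⟨n, rfl⟩
    obtain ⟨m, rfl | rfl⟩ := Nat.even_or_odd' n
    · simp only [(xseq_even m).1, h2, hG, abs_neg]; exact hB _
    · simp only [(xseq_odd m).1, h2, hG, abs_neg]; exact hB _
  · rintro x ⟨n, rfl⟩
    obtain ⟨m, rfl | rfl⟩ := Nat.even_or_odd' n
    · simp only [(xseq_even m).2, hG]; exact hB _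
    · simp only [(xseq_odd m).2, hG]; exact hB _
  · refine Real.sSup_le ?_ hε.le
    rintro r ⟨x, ⟨n, rfl⟩, rfl⟩
    obtain ⟨m, rfl | rfl⟩ := Nat.even_or_odd' n
    · simp only [(xseq_even m).1, (xseq_even m).2, h2, hG, hf0even]
      simpa using hε.le
    · simp only [(xseq_odd m).1, (xseq_odd m).2, h2, hG, hf0odd]
      by_cases hm : m < N
      · have e : B (m + 1) = B m + c (m + 1) := by
          simp only [B]
          rw [min_eq_left (by omega), min_eq_left (by omega), Finset.sum_range_succ]
        rw [e]
        simpa using hε.le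
      · have e : B (m + 1) = B m := by
          simp only [B]
          rw [min_eq_right (by omega), min_eq_right (by omega)]
        rw [e]
        have := hN (m + 1) (by omega)
        rw [Real.dist_eq] at this
        simpa using this.le

/-- for a sequence `cₙ > 0` with `cₙ → 0` and `∑ cₙ = ∞`, the
function `f₀` with `f₀(x^{2n}) = 0`, `f₀(x^{2n+1}) = c_{n+1}` is continuous on
`X = {x⁰, x¹, …}` and `inf_{g ∈ R_b(X)} ‖f₀ − g‖ = 0`. -/
theorem f0_continuous_and_inf_dist_to_Rb_eq_zero
    (c : ℕ → ℝ) (hpos : ∀ m : ℕ, 1 ≤ m → 0 < c m)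
    (hlim : Filter.Tendsto c Filter.atTop (nhds 0))
    (hdiv : ¬ Summable fun m => c (m + 1))
    (f0 : (Fin 2 → ℝ) → ℝ)
    (hf0even : ∀ m : ℕ, f0 (xseq (2 * m)) = 0)
    (hf0odd : ∀ m : ℕ, f0 (xseq (2 * m + 1)) = c (m + 1)) :
    ContinuousOn f0 (Set.range xseq) ∧
    sInf ((supDist (Set.range xseq) f0) ''
        RbSet ![(1 : ℝ), -1] ![(1 : ℝ), 1] (Set.range xseq)) = 0 := by
  refine ⟨f0_cont f0 (hf0even 0) (f0_seq_tendsto c hlim f0 hf0even hf0odd), ?_⟩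
  have hnn : ∀ r ∈ (supDist (Set.range xseq) f0) ''
      RbSet ![(1 : ℝ), -1] ![(1 : ℝ), 1] (Set.range xseq), 0 ≤ r := by
    rintro r ⟨g, _, rfl⟩
    refine Real.sSup_nonneg ?_
    rintro r ⟨x, _, rfl⟩
    exact abs_nonneg _
  refine le_antisymm (le_of_forall_pos_le_add fun ε hε => ?_) (Real.sInf_nonneg hnn)
  obtain ⟨g, hg, hgε⟩ := exists_approx c hlim f0 hf0even hf0odd ε hε
  rw [zero_add]
  exact (csInf_le ⟨0, hnn⟩ ⟨g, hg, rfl⟩).trans hgε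
end

section
/- Let a¹ = (1, −1), a² = (1, 1) in ℝ², let X = {x⁰, x¹, x², ...} ⊂ ℝ² where x⁰ = (2, 2/3), x¹ = (2/3, −2/3), x² = (0, 0), and x^{3+k} = (Σ_{j=0}^{k} 2^{−j}, Σ_{j=0}^{k} (−1)^j 2^{−j}) for k = 0, 1, 2, .... Let (cₙ)_{n≥1} be a sequence with cₙ > 0, and let f₀ : X → ℝ be defined by f₀(x^{2n}) = 0 and f₀(x^{2n+1}) = c_{n+1} for n = 0, 1, 2, .... If f₀(x) = g₁(a¹·x) + g₂(a²·x) for all x ∈ X, for some g₁, g₂ : ℝ → ℝ, then for every k ≥ 0 one has g₂(a²·x^{2k+1}) − g₂(a²·x⁰) = Σ_{n=0}^{k} c_{n+1}. -/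
open Matrix Set Filter Topology

theorem xseq_a1 (n : ℕ) :
    ![(1 : ℝ), -1] ⬝ᵥ xseq (2 * n) = ![(1 : ℝ), -1] ⬝ᵥ xseq (2 * n + 1) := by
  match n with
  | 0 => simp [xseq, dotProduct, Fin.sum_univ_two]; norm_num
  | 1 => simp [xseq, dotProduct, Fin.sum_univ_two]
  | m + 2 =>
    have h1 : 2 * (m + 2) = (2 * m + 1) + 3 := by ring
    have h2 : (2 * m + 1) + 3 + 1 = (2 * m + 2) + 3 := by ring
    have h3 : (-(1 / 2) : ℝ) ^ (2 * m + 2) = (1 / 2 : ℝ) ^ (2 * m + 2) :=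
      Even.neg_pow ⟨m + 1, by ring⟩ _
    rw [h1, h2]
    simp only [xseq, dotProduct, Fin.sum_univ_two, Matrix.cons_val_zero, Matrix.cons_val_one]
    rw [Finset.sum_range_succ _ (2 * m + 2), Finset.sum_range_succ _ (2 * m + 2), h3]
    ring

theorem xseq_a2 (n : ℕ) :
    ![(1 : ℝ), 1] ⬝ᵥ xseq (2 * n + 1) = ![(1 : ℝ), 1] ⬝ᵥ xseq (2 * n + 2) := by
  match n with
  | 0 => simp [xseq, dotProduct, Fin.sum_univ_two]
  | m + 1 =>
    have h1 : 2 * (m + 1) + 1 = (2 * m) + 3 := by ring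
    have h2 : 2 * (m + 1) + 2 = (2 * m + 1) + 3 := by ring
    have h3 : (-(1 / 2) : ℝ) ^ (2 * m + 1) = -(1 / 2 : ℝ) ^ (2 * m + 1) :=
      Odd.neg_pow ⟨m, by ring⟩ _
    rw [h1, h2]
    simp only [xseq, dotProduct, Fin.sum_univ_two, Matrix.cons_val_zero, Matrix.cons_val_one]
    rw [Finset.sum_range_succ _ (2 * m + 1), Finset.sum_range_succ _ (2 * m + 1), h3]
    ring

/-- if `f₀ = g₁(a¹·x) + g₂(a²·x)` on `X = {x⁰, x¹, …}`, then for
every `k ≥ 0`, `g₂(a²·x^{2k+1}) − g₂(a²·x⁰) = ∑_{n=0}^{k} c_{n+1}`. -/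
theorem g2_increment_along_path
    (c : ℕ → ℝ) (hpos : ∀ m : ℕ, 1 ≤ m → 0 < c m)
    (f0 : (Fin 2 → ℝ) → ℝ)
    (hf0even : ∀ m : ℕ, f0 (xseq (2 * m)) = 0)
    (hf0odd : ∀ m : ℕ, f0 (xseq (2 * m + 1)) = c (m + 1))
    (g1 g2 : ℝ → ℝ)
    (hrep : ∀ x ∈ Set.range xseq,
      f0 x = g1 (![(1 : ℝ), -1] ⬝ᵥ x) + g2 (![(1 : ℝ), 1] ⬝ᵥ x)) :
    ∀ k : ℕ,
      g2 (![(1 : ℝ), 1] ⬝ᵥ xseq (2 * k + 1)) - g2 (![(1 : ℝ), 1] ⬝ᵥ xseq 0) =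
        ∑ m ∈ Finset.range (k + 1), c (m + 1) := by
  have step : ∀ n : ℕ, g2 (![(1 : ℝ), 1] ⬝ᵥ xseq (2 * n + 1))
      - g2 (![(1 : ℝ), 1] ⬝ᵥ xseq (2 * n)) = c (n + 1) := by
    intro n
    have e := hrep _ ⟨2 * n, rfl⟩
    have o := hrep _ ⟨2 * n + 1, rfl⟩
    rw [hf0even, xseq_a1] at e
    rw [hf0odd] at o
    linarith
  intro k
  induction k with
  | zero => simpa using step 0
  | succ k ih =>
    rw [Finset.sum_range_succ, ← ih, ← step (k + 1), xseq_a2 k,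
      show 2 * (k + 1) = 2 * k + 2 by ring]
    ring
end

section
/- Let a¹ = (1, −1), a² = (1, 1) in ℝ², let X = {x⁰, x¹, x², ...} ⊂ ℝ² where x⁰ = (2, 2/3), x¹ = (2/3, −2/3), x² = (0, 0), and x^{3+k} = (Σ_{j=0}^{k} 2^{−j}, Σ_{j=0}^{k} (−1)^j 2^{−j}) for k = 0, 1, 2, .... Then there exists a continuous function f₀ ∈ B(X) having no extremal element in R_b(X); consequently, R_b(X) is not proximinal in B(X). -/
open Matrix Set Filter Topology

namespace XSeqAux

noncomputable def psi (s : ℝ) : ℝ := s / |s| / (1 + |Real.log s|)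

lemma abs_psi_le (s : ℝ) : |psi s| ≤ (1 + |Real.log s|)⁻¹ := by
  unfold psi
  have h : |s / (|s|)| ≤ 1 := by
    rw [abs_div, abs_abs]; exact div_self_le_one _
  have hp : 0 < 1 + |Real.log s| := by positivity
  rw [abs_div, abs_of_pos hp, div_eq_mul_inv]
  exact mul_le_of_le_one_left (by positivity) h

lemma abs_psi_le_one (s : ℝ) : |psi s| ≤ 1 :=
  (abs_psi_le s).trans (inv_le_one_of_one_le₀ (by linarith [abs_nonneg (Real.log s)]))

lemma psi_zero : psi 0 = 0 := by simp [psi]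

lemma continuous_psi : Continuous psi := by
  rw [continuous_iff_continuousAt]
  intro s
  by_cases hs : s = 0
  · subst hs
    rw [continuousAt_iff_punctured_nhds, psi_zero]
    have h1 : Tendsto (fun s : ℝ => 1 + |Real.log s|) (𝓝[≠] 0) atTop :=
      tendsto_atTop_add_const_left _ _ (tendsto_abs_atBot_atTop.comp Real.tendsto_log_nhdsNE_zero)
    exact squeeze_zero_norm (fun s => abs_psi_le s) h1.inv_tendsto_atTop
  · unfold psi
    have h2 : ContinuousAt Real.log s := Real.continuousAt_log hs
    refine ContinuousAt.div (ContinuousAt.div continuousAt_id continuous_abs.continuousAt ?_)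
      (continuousAt_const.add h2.abs) ?_
    · simpa using hs
    · positivity

noncomputable def f0 (x : Fin 2 → ℝ) : ℝ := psi (3 * x 1 - 2)

lemma continuous_f0 : Continuous f0 := by
  unfold f0
  exact continuous_psi.comp (by fun_prop)

noncomputable def dl : ℕ → ℝ
  | 0 => 4 / 3
  | (j + 1) => 4 / 3 - 4 / 3 * (1 / 4) ^ j

lemma dl_inj : Function.Injective dl := by
  have hpos : ∀ j : ℕ, (0 : ℝ) < (1 / 4) ^ j := fun j => by positivity
  intro a b h
  rcases a with _ | a <;> rcases b with _ | b
  · rfl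
  · simp only [dl] at h; linarith [hpos b]
  · simp only [dl] at h; linarith [hpos a]
  · simp only [dl] at h
    have h' : ((1 : ℝ) / 4) ^ a = (1 / 4) ^ b := by linarith
    have := pow_right_injective₀ (by norm_num : (0 : ℝ) < 1 / 4) (by norm_num) h'
    omega

lemma xs_fst (k : ℕ) : xseq (k + 3) 0 = 2 - (1 / 2) ^ k := by
  simp only [xseq, Matrix.cons_val_zero]
  rw [geom_sum_eq (by norm_num)]; ring

lemma xs_snd (k : ℕ) : xseq (k + 3) 1 = 2 / 3 + 1 / 3 * (-(1 / 2)) ^ k := by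
  simp only [xseq, Matrix.cons_val_one, Matrix.cons_val_zero, Matrix.cons_val_fin_one]
  rw [geom_sum_eq (by norm_num)]; ring

lemma half_pow_even (j : ℕ) : ((1 : ℝ) / 2) ^ (2 * j) = (1 / 4) ^ j := by
  rw [pow_mul]; norm_num

lemma neg_half_pow_even (j : ℕ) : (-((1 : ℝ) / 2)) ^ (2 * j) = (1 / 4) ^ j := by
  rw [pow_mul]; norm_num

lemma dot1 (n : ℕ) : ![(1 : ℝ), -1] ⬝ᵥ xseq n = dl (n / 2) := by
  simp only [dotProduct, Fin.sum_univ_two, Matrix.cons_val_zero, Matrix.cons_val_one]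
  rcases n with _ | _ | _ | k
  · norm_num [xseq, dl]
  · norm_num [xseq, dl]
  · norm_num [xseq, dl]
  · rw [xs_fst, xs_snd]
    obtain ⟨j, rfl | rfl⟩ := Nat.even_or_odd' k
    · rw [show (2 * j + 1 + 1 + 1) / 2 = j + 1 by omega, half_pow_even, neg_half_pow_even, dl]
      ring
    · rw [show (2 * j + 1 + 1 + 1 + 1) / 2 = j + 1 + 1 by omega, pow_succ, pow_succ,
        half_pow_even, neg_half_pow_even, dl]
      ring

lemma dot2 (n : ℕ) : ![(1 : ℝ), 1] ⬝ᵥ xseq n = 2 * dl ((n + 1) / 2) := by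
  simp only [dotProduct, Fin.sum_univ_two, Matrix.cons_val_zero, Matrix.cons_val_one]
  rcases n with _ | _ | _ | k
  · norm_num [xseq, dl]
  · norm_num [xseq, dl]
  · norm_num [xseq, dl]
  · rw [xs_fst, xs_snd]
    obtain ⟨j, rfl | rfl⟩ := Nat.even_or_odd' k
    · rw [show (2 * j + 1 + 1 + 1 + 1) / 2 = j + 1 + 1 by omega, half_pow_even,
        neg_half_pow_even, dl]
      ring
    · rw [show (2 * j + 1 + 1 + 1 + 1 + 1) / 2 = j + 1 + 1 by omega, pow_succ, pow_succ,
        half_pow_even, neg_half_pow_even, dl]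
      ring

/-- Every sum `u n + u (n+1)` with `u` bounded is realized in `R_b`. -/
lemma exists_Rb (u : ℕ → ℝ) (M : ℝ) (hu : ∀ n, |u n| ≤ M) :
    ∃ g ∈ RbSet ![(1 : ℝ), -1] ![(1 : ℝ), 1] (Set.range xseq),
      ∀ n, g (xseq n) = u n + u (n + 1) := by
  let g1 : ℝ → ℝ := Function.extend dl (fun j => u (2 * j + 1)) 0
  let g2 : ℝ → ℝ := fun t => Function.extend dl (fun j => u (2 * j)) 0 (t / 2)
  have h1 : ∀ n, g1 (![(1 : ℝ), -1] ⬝ᵥ xseq n) = u (2 * (n / 2) + 1) := fun n => by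
    rw [dot1]; exact dl_inj.extend_apply _ _ _
  have h2 : ∀ n, g2 (![(1 : ℝ), 1] ⬝ᵥ xseq n) = u (2 * ((n + 1) / 2)) := fun n => by
    rw [dot2]; simp only [g2]
    rw [mul_div_cancel_left₀ _ (by norm_num : (2 : ℝ) ≠ 0)]
    exact dl_inj.extend_apply _ _ _
  refine ⟨fun x => g1 (![(1 : ℝ), -1] ⬝ᵥ x) + g2 (![(1 : ℝ), 1] ⬝ᵥ x),
    ⟨g1, g2, fun _ _ => rfl, ⟨M, ?_⟩, ⟨M, ?_⟩⟩, ?_⟩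
  · rintro _ ⟨n, rfl⟩
    simp only [h1]; exact hu _
  · rintro _ ⟨n, rfl⟩
    simp only [h2]; exact hu _
  · intro n
    simp only [h1, h2]
    obtain ⟨j, rfl | rfl⟩ := Nat.even_or_odd' n
    · rw [show 2 * (2 * j / 2) = 2 * j by omega, show 2 * ((2 * j + 1) / 2) = 2 * j by omega]
      ring
    · rw [show 2 * ((2 * j + 1) / 2) = 2 * j by omega,
        show 2 * ((2 * j + 1 + 1) / 2) = 2 * j + 1 + 1 by omega]

/-- Conversely. -/
lemma of_Rb {g : (Fin 2 → ℝ) → ℝ}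
    (hg : g ∈ RbSet ![(1 : ℝ), -1] ![(1 : ℝ), 1] (Set.range xseq)) :
    ∃ (u : ℕ → ℝ) (M : ℝ), (∀ n, |u n| ≤ M) ∧ ∀ n, g (xseq n) = u n + u (n + 1) := by
  obtain ⟨g1, g2, h, ⟨M1, hM1⟩, ⟨M2, hM2⟩⟩ := hg
  refine ⟨fun n => if n % 2 = 0 then g2 (2 * dl (n / 2)) else g1 (dl (n / 2)), max M1 M2, ?_, ?_⟩
  · intro n
    have a1 := hM1 _ ⟨n, rfl⟩
    simp only [dot1] at a1
    beta_reduce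
    split_ifs with hn
    · have a2 := hM2 _ ⟨n, rfl⟩
      simp only [dot2] at a2
      rw [show (n + 1) / 2 = n / 2 by omega] at a2
      exact a2.trans (le_max_right _ _)
    · exact a1.trans (le_max_left _ _)
  · intro n
    rw [h _ ⟨n, rfl⟩, dot1, dot2]
    obtain ⟨j, rfl | rfl⟩ := Nat.even_or_odd' n
    · simp only [show 2 * j % 2 = 0 by omega, show (2 * j + 1) % 2 ≠ 0 by omega, if_true, if_false,
        show 2 * j / 2 = j by omega, show (2 * j + 1) / 2 = j by omega]
      ring
    · simp only [show (2 * j + 1 + 1) % 2 = 0 by omega, show (2 * j + 1) % 2 ≠ 0 by omega, if_true,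
        if_false, show (2 * j + 1 + 1) / 2 = j + 1 by omega, show (2 * j + 1) / 2 = j by omega]

lemma f0_val (k : ℕ) : f0 (xseq (k + 3)) = psi ((-(1 / 2)) ^ k) := by
  unfold f0; rw [xs_snd]; congr 1; ring

lemma f0_tendsto : Tendsto (fun n => f0 (xseq n)) atTop (𝓝 0) := by
  rw [← tendsto_add_atTop_iff_nat 3]
  simp only [f0_val]
  have h : Tendsto (fun k : ℕ => (-((1 : ℝ) / 2)) ^ k) atTop (𝓝 0) :=
    tendsto_pow_atTop_nhds_zero_of_abs_lt_one (by norm_num [abs_of_pos])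
  have := (continuous_psi.tendsto 0).comp h
  rwa [psi_zero] at this

lemma f0_lower (k : ℕ) : 1 / ((k : ℝ) + 1) ≤ (-1) ^ k * f0 (xseq (k + 3)) := by
  rw [f0_val]
  have hl : Real.log ((-(1 / 2)) ^ k) = -(k * Real.log 2) := by
    rw [Real.log_pow, Real.log_neg_eq_log, one_div, Real.log_inv]; ring
  have hs : ((-1 : ℝ)) ^ k * ((-(1 / 2)) ^ k / |(-(1 / 2)) ^ k|) = 1 := by
    rw [abs_pow, abs_neg, ← div_pow, ← mul_pow]
    norm_num [abs_of_pos]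
  have h2 : 0 ≤ Real.log 2 := Real.log_nonneg (by norm_num)
  have h2' : Real.log 2 ≤ 1 := by linarith [Real.log_two_lt_d9]
  have hk : (0 : ℝ) ≤ k := Nat.cast_nonneg k
  unfold psi
  rw [← mul_div_assoc, hs, hl, abs_neg, abs_of_nonneg (by positivity)]
  apply one_div_le_one_div_of_le
  · positivity
  · nlinarith

lemma approx (ε : ℝ) (hε : 0 < ε) :
    ∃ g ∈ RbSet ![(1 : ℝ), -1] ![(1 : ℝ), 1] (Set.range xseq),
      supDist (Set.range xseq) f0 g ≤ ε := by
  obtain ⟨N, hN⟩ := (Metric.tendsto_atTop.1 f0_tendsto) ε hε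
  let w : ℕ → ℝ := fun n => if n < N then (-1) ^ n * f0 (xseq n) else 0
  let u : ℕ → ℝ := fun n => -((-1) ^ n * ∑ i ∈ Finset.range n, w i)
  have hw : ∀ i, |w i| ≤ if i < N then 1 else 0 := by
    intro i
    simp only [w]
    split_ifs
    · rw [abs_mul, abs_pow, abs_neg, abs_one, one_pow, one_mul]; exact abs_psi_le_one _
    · simp
  have hu : ∀ n, |u n| ≤ N := by
    intro n
    simp only [u]
    rw [abs_neg, abs_mul, abs_pow, abs_neg, abs_one, one_pow, one_mul]
    calc |∑ i ∈ Finset.range n, w i| ≤ ∑ i ∈ Finset.range n, |w i| := Finset.abs_sum_le_sum_abs _ _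
      _ ≤ ∑ i ∈ Finset.range n, (if i < N then (1 : ℝ) else 0) := Finset.sum_le_sum fun i _ => hw i
      _ = (((Finset.range n).filter (· < N)).card : ℝ) := by simp [Finset.sum_boole]
      _ ≤ N := by
        have : ((Finset.range n).filter (· < N)).card ≤ (Finset.range N).card :=
          Finset.card_le_card (fun i hi => by simp at hi ⊢; exact hi.2)
        rw [Finset.card_range] at this
        exact_mod_cast this
  obtain ⟨g, hg, hgu⟩ := exists_Rb u N hu
  refine ⟨g, hg, Real.sSup_le ?_ hε.le⟩
  rintro _ ⟨_, ⟨n, rfl⟩, rfl⟩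
  have hgn : g (xseq n) = (-1) ^ n * w n := by
    rw [hgu]; simp only [u]; rw [Finset.sum_range_succ, pow_succ]; ring
  rw [hgn]
  simp only [w]
  split_ifs with h
  · rw [← mul_assoc, ← mul_pow]; simp [hε.le]
  · have := hN n (not_lt.1 h)
    rw [Real.dist_eq, sub_zero] at this
    simpa using this.le

end XSeqAux

/-- on `X = {x⁰, x¹, …}` there exists a continuous bounded function
`f₀` having no extremal element in `R_b(X)`; consequently `R_b(X)` is not proximinal
in `B(X)`. -/
theorem Rb_not_proximinal_on_xseq :
    ∃ f0 : (Fin 2 → ℝ) → ℝ,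
      ContinuousOn f0 (Set.range xseq) ∧ BddOn f0 (Set.range xseq) ∧
      ¬ HasExtremalIn (Set.range xseq) f0
          (RbSet ![(1 : ℝ), -1] ![(1 : ℝ), 1] (Set.range xseq)) := by
  refine ⟨XSeqAux.f0, XSeqAux.continuous_f0.continuousOn,
    ⟨1, fun _ _ => XSeqAux.abs_psi_le_one _⟩, ?_⟩
  rintro ⟨g, hg, hgi⟩
  have hle : supDist (Set.range xseq) XSeqAux.f0 g ≤ 0 := by
    refine le_of_forall_pos_le_add fun ε hε => ?_
    obtain ⟨g', hg', h'⟩ := XSeqAux.approx ε hε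
    rw [hgi, zero_add]
    refine (csInf_le ⟨0, ?_⟩ (Set.mem_image_of_mem _ hg')).trans h'
    rintro _ ⟨q, _, rfl⟩
    apply Real.sSup_nonneg
    rintro _ ⟨x, _, rfl⟩
    exact abs_nonneg _
  obtain ⟨u, M, hu, hgu⟩ := XSeqAux.of_Rb hg
  have heq : ∀ n, XSeqAux.f0 (xseq n) = u n + u (n + 1) := by
    intro n
    have hb : BddAbove {r | ∃ x ∈ Set.range xseq, r = |XSeqAux.f0 x - g x|} := by
      refine ⟨1 + (M + M), ?_⟩
      rintro _ ⟨_, ⟨m, rfl⟩, rfl⟩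
      refine (abs_sub _ _).trans (add_le_add (XSeqAux.abs_psi_le_one _) ?_)
      rw [hgu]
      exact (abs_add_le _ _).trans (add_le_add (hu _) (hu _))
    have h0 : |XSeqAux.f0 (xseq n) - g (xseq n)| ≤ 0 :=
      (le_csSup hb ⟨_, ⟨n, rfl⟩, rfl⟩).trans hle
    have := abs_nonpos_iff.1 h0
    rw [← hgu]; linarith
  have hsum : ∀ K : ℕ, ∑ k ∈ Finset.range K, (-1) ^ k * XSeqAux.f0 (xseq (k + 3))
      = u 3 - (-1) ^ K * u (K + 3) := by
    intro K
    induction K with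
    | zero => simp
    | succ K ih =>
      rw [Finset.sum_range_succ, ih, heq, pow_succ, show K + 1 + 3 = K + 3 + 1 by ring]; ring
  obtain ⟨K, hK⟩ := (Real.tendsto_sum_range_one_div_nat_succ_atTop.eventually_gt_atTop (M + M)).exists
  have h1 := Finset.sum_le_sum (s := Finset.range K) fun k _ => XSeqAux.f0_lower k
  rw [hsum] at h1
  have h2 : |(-1) ^ K * u (K + 3)| ≤ M := by
    rw [abs_mul, abs_pow, abs_neg, abs_one, one_pow, one_mul]; exact hu _
  have h3 := hu 3
  have h4 := abs_le.1 h2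
  have h5 := abs_le.1 h3
  linarith [h4.1, h5.2]
end

section
/- Let X ⊂ ℝⁿ be compact and let a¹, a² be linearly independent vectors in ℝⁿ. Suppose a¹, a² can be completed to a basis {a¹, a², a³, ..., aⁿ} of ℝⁿ with the following property: for every point x⁰ ∈ X and every δ > 0 there exist a number δ₀ ∈ (0, δ] and a point x^σ in the set σ = {x ∈ X : a²·x⁰ − δ₀ ≤ a²·x ≤ a²·x⁰ + δ₀} such that for every x ∈ σ the system a²·x′ = a²·x^σ, a¹·x′ = a¹·x, Σ_{i=3}^{n} |aⁱ·x′ − aⁱ·x| < δ has a solution x′ ∈ σ. Then R_c(X) is proximinal in C(X). -/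
open Matrix Set Filter Topology

namespace RidgeProx

lemma iter {Y : Type*} [TopologicalSpace Y] [CompactSpace Y] (Q : ℕ → C(Y, ℝ) → Prop)
    (h0 : ∃ g, Q 0 g) (C : ℝ) (hC : 0 ≤ C)
    (hs : ∀ k g, Q k g → ∃ g', Q (k + 1) g' ∧ ∀ y, |g y - g' y| ≤ C / 2 / 2 ^ k) :
    ∃ (u : ℕ → C(Y, ℝ)) (g : C(Y, ℝ)), (∀ k, Q k (u k)) ∧
      ∀ y, Tendsto (fun k => u k y) atTop (𝓝 (g y)) := by
  classical
  obtain ⟨g0, hg0⟩ := h0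
  choose! N hN1 hN2 using hs
  let u : ℕ → C(Y, ℝ) := fun k => Nat.rec g0 (fun k g => N k g) k
  have hu : ∀ k, Q k (u k) := by
    intro k
    induction k with
    | zero => exact hg0
    | succ k ih => exact hN1 k _ ih
  have hd : ∀ k, dist (u k) (u (k + 1)) ≤ C / 2 / 2 ^ k := by
    intro k
    rw [ContinuousMap.dist_le (by positivity)]
    intro y
    rw [Real.dist_eq]
    exact hN2 k _ (hu k) y
  have hc : CauchySeq u := cauchySeq_of_le_geometric_two hd
  obtain ⟨g, hg⟩ := cauchySeq_tendsto_of_complete hc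
  refine ⟨u, g, hu, fun y => ?_⟩
  exact ((continuous_eval_const y).tendsto g).comp hg

/-- Potentials at level `c`. -/
def Sol {X Y₁ Y₂ : Type*} (p : X → Y₁) (q : X → Y₂) (f : X → ℝ) (c : ℝ) (h : Y₂ → ℝ) : Prop :=
  ∀ x x', p x = p x' → f x - f x' ≤ h (q x) - h (q x') + 2 * c

lemma exists_sol {X Y₁ Y₂ : Type*} (p : X → Y₁) (q : X → Y₂) (f : X → ℝ) (E : ℝ)
    (H : ∀ ε > 0, ∃ h, Sol p q f (E + ε) h) : ∃ h, Sol p q f E h := by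
  classical
  have H' : ∀ k : ℕ, ∃ h, Sol p q f (E + 1 / ((k : ℝ) + 1)) h := fun k => H _ (by positivity)
  choose h hh using H'
  let R : Y₂ → Y₂ → Prop := fun s t => ∃ x x', p x = p x' ∧ q x = s ∧ q x' = t
  have hR : ∀ s t, R s t → ∃ B, ∀ k, |h k s - h k t| ≤ B := by
    rintro s t ⟨x, x', hp, rfl, rfl⟩
    refine ⟨|f x - f x'| + 2 * |E| + 2, fun k => ?_⟩
    have h1 := hh k x x' hp
    have h2 := hh k x' x hp.symm
    have h3 : 1 / ((k : ℝ) + 1) ≤ 1 := by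
      rw [div_le_one (by positivity)]
      have : (0 : ℝ) ≤ k := Nat.cast_nonneg k
      linarith
    have h4 := le_abs_self E
    have h5 := le_abs_self (f x - f x')
    have h6 := neg_abs_le (f x - f x')
    rw [abs_le]
    constructor <;> linarith
  have hE : ∀ s t, Relation.EqvGen R s t → ∃ B, ∀ k, |h k s - h k t| ≤ B := by
    intro s t hst
    induction hst with
    | rel x y hxy => exact hR _ _ hxy
    | refl x => exact ⟨0, fun k => by simp⟩
    | symm x y _ ih =>
      obtain ⟨B, hB⟩ := ih
      exact ⟨B, fun k => by rw [abs_sub_comm]; exact hB k⟩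
    | trans x y z _ _ ih1 ih2 =>
      obtain ⟨B, hB⟩ := ih1
      obtain ⟨B', hB'⟩ := ih2
      refine ⟨B + B', fun k => ?_⟩
      have := abs_sub_le (h k x) (h k y) (h k z)
      linarith [hB k, hB' k]
  let S : Setoid Y₂ := Relation.EqvGen.setoid R
  let b : Y₂ → Y₂ := fun s => (Quotient.mk S s).out
  have hb : ∀ s, Relation.EqvGen R s (b s) := fun s =>
    Relation.EqvGen.symm _ _ (Quotient.mk_out (s := S) s)
  have hbe : ∀ s t, R s t → b s = b t := by
    intro s t hst
    have : Quotient.mk S s = Quotient.mk S t := Quotient.sound (Relation.EqvGen.rel _ _ hst)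
    simp only [b, this]
  have hlim : ∀ s, ∃ l, Tendsto (fun k => h k s - h k (b s)) (hyperfilter ℕ : Filter ℕ) (𝓝 l) := by
    intro s
    obtain ⟨B, hB⟩ := hE _ _ (hb s)
    have hc : IsCompact (Set.Icc (-B) B) := isCompact_Icc
    obtain ⟨l, _, hl⟩ := hc.ultrafilter_le_nhds ((hyperfilter ℕ).map (fun k => h k s - h k (b s)))
      (by
        rw [Filter.le_principal_iff]
        refine Filter.mem_map.2 (Filter.univ_mem' (fun k => ?_))
        exact abs_le.1 (hB k))
    exact ⟨l, hl⟩
  choose l hl using hlim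
  refine ⟨l, fun x x' hp => ?_⟩
  have hbb := hbe (q x) (q x') ⟨x, x', hp, rfl, rfl⟩
  have t1 : Tendsto (fun k : ℕ => 1 / ((k : ℝ) + 1)) (hyperfilter ℕ : Filter ℕ) (𝓝 0) :=
    tendsto_one_div_add_atTop_nhds_zero_nat.mono_left Nat.hyperfilter_le_atTop
  have t2 := ((hl (q x)).sub (hl (q x'))).add ((t1.const_add E).const_mul 2)
  have t3 := ge_of_tendsto' (b := f x - f x') t2 (fun k => by
    have := hh k x x' hp
    simp only [hbb]
    linarith)
  simpa using t3

lemma improve {X Y₁ Y₂ : Type*} [TopologicalSpace Y₂] [NormalSpace Y₂] [ParacompactSpace Y₂]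
    (p : X → Y₁) (q : X → Y₂) (f : X → ℝ) (E : ℝ)
    (H : ∀ s : Y₂, ∀ ε > 0, ∀ V ∈ 𝓝 s, ∃ t ∈ V, ∀ᶠ y in 𝓝 s, ∀ x, q x = y →
      ∃ z, q z = t ∧ p z = p x ∧ |f z - f x| ≤ ε)
    (h : Y₂ → ℝ) (hh : Sol p q f E h) (ε : ℝ) (hε : 0 < ε)
    (B : Y₂ → Set ℝ) (hB : ∀ s, Convex ℝ (B s))
    (hBh : ∀ s, ∃ V ∈ 𝓝 s, ∀ t ∈ V, ∀ y ∈ V, h t ∈ B y) :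
    ∃ g : C(Y₂, ℝ), (∀ y, g y ∈ B y) ∧ ∃ h', Sol p q f E h' ∧ ∀ y, |h' y - g y| ≤ ε := by
  let Good : Y₂ → Y₂ → Prop := fun t y => ∀ x, q x = y → ∃ z, q z = t ∧ p z = p x ∧ |f z - f x| ≤ ε
  let A : Y₂ → Y₂ → ℝ := fun t y => max (h t - ε) (min (h y) (h t + ε))
  let W : Y₂ → Set ℝ := fun y => {w | (∃ t, Good t y ∧ A t y ≤ w) ∧ (∃ t, Good t y ∧ w ≤ A t y)}
  have hW : ∀ y, Convex ℝ (W y) := by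
    intro y
    apply Set.OrdConnected.convex
    refine ⟨?_⟩
    rintro w1 ⟨⟨t, ht, h1⟩, _⟩ w2 ⟨_, ⟨t', ht', h2⟩⟩ w ⟨hw1, hw2⟩
    exact ⟨⟨t, ht, h1.trans hw1⟩, ⟨t', ht', hw2.trans h2⟩⟩
  let T : Y₂ → Set ℝ := fun y => B y ∩ {v | ∃ w ∈ W y, |w - v| ≤ ε}
  have hT : ∀ y, Convex ℝ (T y) := by
    intro y
    refine (hB y).inter ?_
    rintro v1 ⟨w1, hw1, h1⟩ v2 ⟨w2, hw2, h2⟩ a b ha hb hab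
    refine ⟨a • w1 + b • w2, hW y hw1 hw2 ha hb hab, ?_⟩
    simp only [smul_eq_mul]
    rw [abs_le] at *
    constructor <;> nlinarith
  obtain ⟨g, hg⟩ := exists_continuous_forall_mem_convex_of_local_const hT (by
    intro s
    obtain ⟨V, hV, hVB⟩ := hBh s
    obtain ⟨t, htV, ht⟩ := H s ε hε V hV
    refine ⟨h t, ?_⟩
    filter_upwards [ht, hV] with y hy hyV
    refine ⟨hVB t htV y hyV, A t y, ⟨⟨t, hy, le_rfl⟩, ⟨t, hy, le_rfl⟩⟩, ?_⟩
    rw [abs_le]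
    constructor
    · have := le_max_left (h t - ε) (min (h y) (h t + ε))
      simp only [A]; linarith
    · have : A t y ≤ h t + ε := max_le (by linarith) (min_le_right _ _)
      linarith)
  choose hgB h' hW' hd using hg
  refine ⟨g, hgB, h', ?_, hd⟩
  intro x x' hp
  obtain ⟨t, ht, h1⟩ := (hW' (q x)).1
  obtain ⟨t', ht', h2⟩ := (hW' (q x')).2
  obtain ⟨z, hz1, hz2, hz3⟩ := ht x rfl
  obtain ⟨z', hz1', hz2', hz3'⟩ := ht' x' rfl
  have k1 : min (h (q x)) (h t + ε) ≤ A t (q x) := le_max_right _ _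
  have k2 : A t' (q x') ≤ max (h t' - ε) (h (q x')) :=
    max_le_max le_rfl (min_le_left _ _)
  have e1 := hh x x' hp
  have e2 := hh z x' (hz2.trans hp)
  have e3 := hh x z' (hp.trans hz2'.symm)
  have e4 := hh z z' (hz2.trans (hp.trans hz2'.symm))
  rw [hz1] at e2 e4
  rw [hz1'] at e3 e4
  rw [abs_le] at hz3 hz3'
  rcases min_choice (h (q x)) (h t + ε) with m | m <;>
  rcases max_choice (h t' - ε) (h (q x')) with m' | m' <;>
  rw [m] at k1 <;> rw [m'] at k2 <;> linarith [hz3.1, hz3.2, hz3'.1, hz3'.2]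

lemma exists_cont_sol {X Y₁ Y₂ : Type*} [TopologicalSpace Y₂] [CompactSpace Y₂] [T2Space Y₂]
    (p : X → Y₁) (q : X → Y₂) (f : X → ℝ) (E : ℝ)
    (H : ∀ s : Y₂, ∀ ε > 0, ∀ V ∈ 𝓝 s, ∃ t ∈ V, ∀ᶠ y in 𝓝 s, ∀ x, q x = y →
      ∃ z, q z = t ∧ p z = p x ∧ |f z - f x| ≤ ε)
    (h : Y₂ → ℝ) (hh : Sol p q f E h) : ∃ g : C(Y₂, ℝ), Sol p q f E g := by
  obtain ⟨u, g, hu, hg⟩ := iter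
    (fun k (g : C(Y₂, ℝ)) => ∃ h', Sol p q f E h' ∧ ∀ y, |h' y - g y| ≤ (1 / 2) ^ k)
    (by
      obtain ⟨g, -, hg⟩ := improve p q f E H h hh ((1 / 2) ^ 0) (by positivity) (fun _ => univ)
        (fun _ => convex_univ) (fun s => ⟨univ, univ_mem, fun _ _ _ _ => mem_univ _⟩)
      exact ⟨g, hg⟩) 6 (by norm_num)
    (by
      rintro k g ⟨h', hh', hd⟩
      have hr : (0 : ℝ) < (1 / 2) ^ k := by positivity
      obtain ⟨g', hg', hq⟩ := improve p q f E H h' hh' ((1 / 2) ^ (k + 1)) (by positivity)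
        (fun y => Metric.closedBall (g y) (3 * (1 / 2) ^ k)) (fun _ => convex_closedBall _ _)
        (by
          intro s
          refine ⟨g ⁻¹' (Metric.ball (g s) ((1 / 2) ^ k)),
            g.continuous.continuousAt.preimage_mem_nhds (Metric.ball_mem_nhds _ hr), ?_⟩
          intro t ht y hy
          simp only [mem_preimage, Metric.mem_ball, Metric.mem_closedBall, Real.dist_eq] at *
          have := hd t
          rw [abs_lt] at ht hy
          rw [abs_le] at *
          constructor <;> linarith [ht.1, ht.2, hy.1, hy.2, this.1, this.2])
      refine ⟨g', hq, fun y => ?_⟩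
      have := hg' y
      rw [Metric.mem_closedBall, Real.dist_eq, abs_sub_comm] at this
      calc _ ≤ _ := this
        _ = 6 / 2 / 2 ^ k := by rw [one_div, inv_pow]; ring)
  refine ⟨g, fun x x' hp => ?_⟩
  have t0 : Tendsto (fun k : ℕ => ((1 : ℝ) / 2) ^ k) atTop (𝓝 0) :=
    tendsto_pow_atTop_nhds_zero_of_lt_one (by norm_num) (by norm_num)
  have t1 := (((hg (q x)).sub (hg (q x'))).add (t0.const_mul 2)).add_const (2 * E)
  have := ge_of_tendsto' (b := f x - f x') t1 (fun k => by
    obtain ⟨h', hh', hd⟩ := hu k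
    have a1 := abs_le.1 (hd (q x))
    have a2 := abs_le.1 (hd (q x'))
    have := hh' x x' hp
    linarith [a1.1, a1.2, a2.1, a2.2])
  simpa using this

lemma improve₁ {X Y : Type*} [TopologicalSpace X] [CompactSpace X]
    [TopologicalSpace Y] [CompactSpace Y] [T2Space Y]
    (p : X → Y) (hp : Continuous p) (F : X → ℝ) (hF : Continuous F) (E : ℝ)
    (ε : ℝ) (hε : 0 < ε)
    (B : Y → Set ℝ) (hB : ∀ s, Convex ℝ (B s))
    (hv : ∀ s, ∃ v, (∀ x, p x = s → |F x - v| ≤ E) ∧ ∀ᶠ y in 𝓝 s, v ∈ B y) :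
    ∃ g : C(Y, ℝ), (∀ y, g y ∈ B y) ∧ ∀ x, |F x - g (p x)| ≤ E + ε := by
  let T : Y → Set ℝ := fun y => B y ∩ {v | ∀ x, p x = y → |F x - v| ≤ E + ε}
  have hT : ∀ y, Convex ℝ (T y) := by
    intro y
    refine (hB y).inter ?_
    rintro v1 h1 v2 h2 a b ha hb hab x hx
    have h1 := h1 x hx
    have h2 := h2 x hx
    simp only [smul_eq_mul]
    obtain rfl : b = 1 - a := by linarith
    rw [abs_le] at *
    constructor <;> nlinarith
  obtain ⟨g, hg⟩ := exists_continuous_forall_mem_convex_of_local_const hT (by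
    intro s
    obtain ⟨v, hv, hvB⟩ := hv s
    refine ⟨v, ?_⟩
    have hc : IsClosed (p '' {x | E + ε ≤ |F x - v|}) :=
      hp.isClosedMap _ (isClosed_le continuous_const (hF.sub continuous_const).abs)
    have hs : s ∉ p '' {x | E + ε ≤ |F x - v|} := by
      rintro ⟨x, hx, rfl⟩
      have := hv x rfl
      simp only [mem_ofPred_eq] at hx
      linarith
    filter_upwards [hc.isOpen_compl.mem_nhds hs, hvB] with y hy hyB
    refine ⟨hyB, fun x hx => ?_⟩
    by_contra hcon
    exact hy ⟨x, (not_le.1 hcon).le, hx⟩)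
  exact ⟨g, fun y => (hg y).1, fun x => (hg (p x)).2 x rfl⟩

lemma exists_cont₁ {X Y : Type*} [TopologicalSpace X] [CompactSpace X]
    [TopologicalSpace Y] [CompactSpace Y] [T2Space Y]
    (p : X → Y) (hp : Continuous p) (F : X → ℝ) (hF : Continuous F) (E : ℝ)
    (hE : ∀ x x', p x = p x' → F x - F x' ≤ 2 * E) :
    ∃ g : C(Y, ℝ), ∀ x, |F x - g (p x)| ≤ E := by
  have h0 : ∀ s, ∃ v, ∀ x, p x = s → |F x - v| ≤ E := by
    intro s
    refine ⟨sSup (F '' (p ⁻¹' {s})) - E, ?_⟩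
    intro x hx
    have b1 : ∀ r ∈ F '' (p ⁻¹' {s}), r ≤ F x + 2 * E := by
      rintro _ ⟨x', hx', rfl⟩
      have := hE x' x (by rw [hx]; exact hx')
      linarith
    have h1 : sSup (F '' (p ⁻¹' {s})) ≤ F x + 2 * E := csSup_le ⟨_, x, hx, rfl⟩ b1
    have h2 : F x ≤ sSup (F '' (p ⁻¹' {s})) := le_csSup ⟨_, b1⟩ ⟨x, hx, rfl⟩
    rw [abs_le]
    constructor <;> linarith
  obtain ⟨u, g, hu, hg⟩ := iter
    (fun k (g : C(Y, ℝ)) => ∀ x, |F x - g (p x)| ≤ E + (1 / 2) ^ k)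
    (by
      obtain ⟨g, -, hg⟩ := improve₁ p hp F hF E ((1 / 2) ^ 0) (by positivity) (fun _ => univ)
        (fun _ => convex_univ)
        (fun s => (h0 s).imp fun v hv => ⟨hv, Eventually.of_forall fun _ => mem_univ _⟩)
      exact ⟨g, hg⟩) 4 (by norm_num)
    (by
      rintro k g hgk
      have hr : (0 : ℝ) < (1 / 2) ^ k := by positivity
      obtain ⟨g', hg', hq⟩ := improve₁ p hp F hF E ((1 / 2) ^ (k + 1)) (by positivity)
        (fun y => Metric.closedBall (g y) (2 * (1 / 2) ^ k)) (fun _ => convex_closedBall _ _)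
        (by
          intro s
          obtain ⟨v, hv⟩ := h0 s
          refine ⟨max (g s - (1 / 2) ^ k) (min v (g s + (1 / 2) ^ k)), ?_, ?_⟩
          · intro x hx
            have a1 := hv x hx
            have a2 := hgk x
            rw [hx] at a2
            rw [abs_le] at *
            rcases max_cases (g s - (1 / 2) ^ k) (min v (g s + (1 / 2) ^ k)) with m | m <;>
            rcases min_cases v (g s + (1 / 2) ^ k) with m' | m' <;>
            constructor <;> linarith [a1.1, a1.2, a2.1, a2.2, m.1, m.2, m'.1, m'.2]
          · have := g.continuous.continuousAt.preimage_mem_nhds (Metric.ball_mem_nhds (g s) hr)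
            filter_upwards [this] with y hy
            simp only [mem_preimage, Metric.mem_ball, Metric.mem_closedBall, Real.dist_eq] at *
            rw [abs_lt] at hy
            have m1 := le_max_left (g s - (1 / 2) ^ k) (min v (g s + (1 / 2) ^ k))
            have m2 : max (g s - (1 / 2) ^ k) (min v (g s + (1 / 2) ^ k)) ≤ g s + (1 / 2) ^ k :=
              max_le (by linarith) (min_le_right _ _)
            rw [abs_le]
            constructor <;> linarith [hy.1, hy.2])
      refine ⟨g', hq, fun y => ?_⟩
      have := hg' y
      rw [Metric.mem_closedBall, Real.dist_eq, abs_sub_comm] at this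
      calc _ ≤ _ := this
        _ = 4 / 2 / 2 ^ k := by rw [one_div, inv_pow]; ring)
  refine ⟨g, fun x => ?_⟩
  have t0 : Tendsto (fun k : ℕ => ((1 : ℝ) / 2) ^ k) atTop (𝓝 0) :=
    tendsto_pow_atTop_nhds_zero_of_lt_one (by norm_num) (by norm_num)
  have := le_of_tendsto_of_tendsto' ((hg (p x)).const_sub (F x)).abs (t0.const_add E)
    (fun k => hu k x)
  simpa using this

lemma main {X Y₁ Y₂ : Type*} [TopologicalSpace X] [CompactSpace X]
    [TopologicalSpace Y₁] [CompactSpace Y₁] [T2Space Y₁]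
    [TopologicalSpace Y₂] [CompactSpace Y₂] [T2Space Y₂]
    (p : X → Y₁) (hp : Continuous p) (q : X → Y₂) (hq : Continuous q)
    (f : X → ℝ) (hf : Continuous f) (E : ℝ)
    (H : ∀ s : Y₂, ∀ ε > 0, ∀ V ∈ 𝓝 s, ∃ t ∈ V, ∀ᶠ y in 𝓝 s, ∀ x, q x = y →
      ∃ z, q z = t ∧ p z = p x ∧ |f z - f x| ≤ ε)
    (hE : ∀ ε > 0, ∃ (g1 : Y₁ → ℝ) (g2 : Y₂ → ℝ), ∀ x, |f x - (g1 (p x) + g2 (q x))| ≤ E + ε) :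
    ∃ (g1 : C(Y₁, ℝ)) (g2 : C(Y₂, ℝ)), ∀ x, |f x - (g1 (p x) + g2 (q x))| ≤ E := by
  obtain ⟨h, hh⟩ := exists_sol p q f E (by
    intro ε hε
    obtain ⟨g1, g2, hg⟩ := hE ε hε
    refine ⟨g2, fun x x' hx => ?_⟩
    have a1 := abs_le.1 (hg x)
    have a2 := abs_le.1 (hg x')
    rw [hx] at a1
    linarith [a1.1, a1.2, a2.1, a2.2])
  obtain ⟨g2, hg2⟩ := exists_cont_sol p q f E H h hh
  obtain ⟨g1, hg1⟩ := exists_cont₁ p hp (fun x => f x - g2 (q x))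
    (hf.sub (g2.continuous.comp hq)) E (by
      intro x x' hx
      have := hg2 x x' hx
      linarith)
  refine ⟨g1, g2, fun x => ?_⟩
  have := hg1 x
  rwa [show f x - (g1 (p x) + g2 (q x)) = f x - g2 (q x) - g1 (p x) by ring]

end RidgeProx

/-- Theorem 2.1: let `X ⊂ ℝⁿ` be compact, and suppose the linearly
independent vectors `a¹ = a 0`, `a² = a 1` are completed to a basis `a 0, …, a (n-1)`
of `ℝⁿ` such that for every `x⁰ ∈ X` and `δ > 0` there are `δ₀ ∈ (0, δ]` and a point
`xσ` in `σ = {x ∈ X : |a²·x − a²·x⁰| ≤ δ₀}` such that for every `x ∈ σ` the system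
`a²·x′ = a²·xσ`, `a¹·x′ = a¹·x`, `∑_{i=3}^{n} |aⁱ·x′ − aⁱ·x| < δ` has a solution
`x′ ∈ σ`. Then `R_c(X)` is proximinal in `C(X)`. -/
theorem proximinality_of_Rc_of_maximal_cross_sections
    {n : ℕ} (hn : 2 ≤ n) (a1 a2 : Fin n → ℝ)
    (X : Set (Fin n → ℝ)) (hX : IsCompact X)
    (a : Fin n → (Fin n → ℝ))
    (ha1 : a ⟨0, by omega⟩ = a1) (ha2 : a ⟨1, by omega⟩ = a2)
    (hindep : LinearIndependent ℝ a)
    (hspan : Submodule.span ℝ (Set.range a) = ⊤)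
    (hprop : ∀ x0 ∈ X, ∀ δ : ℝ, 0 < δ →
      ∃ δ0 : ℝ, 0 < δ0 ∧ δ0 ≤ δ ∧
        ∃ xσ ∈ {x ∈ X | |a2 ⬝ᵥ x - a2 ⬝ᵥ x0| ≤ δ0},
          ∀ x ∈ {x ∈ X | |a2 ⬝ᵥ x - a2 ⬝ᵥ x0| ≤ δ0},
            ∃ x' ∈ {x ∈ X | |a2 ⬝ᵥ x - a2 ⬝ᵥ x0| ≤ δ0},
              a2 ⬝ᵥ x' = a2 ⬝ᵥ xσ ∧ a1 ⬝ᵥ x' = a1 ⬝ᵥ x ∧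
              ∑ i ∈ Finset.univ.filter (fun i : Fin n => 2 ≤ (i : ℕ)),
                |a i ⬝ᵥ x' - a i ⬝ᵥ x| < δ)
    (f : (Fin n → ℝ) → ℝ) (hf : ContinuousOn f X) :
    HasExtremalIn X f (RcSet a1 a2 X) := by
  classical
  have hcd : ∀ b : Fin n → ℝ, Continuous (fun x : Fin n → ℝ => b ⬝ᵥ x) := fun b => by
    unfold dotProduct; fun_prop
  set E := sInf ((supDist X f) '' (RcSet a1 a2 X)) with hEdef
  have hnn : ∀ g, 0 ≤ supDist X f g := by
    intro g
    apply Real.sSup_nonneg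
    rintro _ ⟨x, _, rfl⟩
    exact abs_nonneg _
  have hbdd : BddBelow ((supDist X f) '' (RcSet a1 a2 X)) := by
    refine ⟨0, ?_⟩
    rintro _ ⟨g, _, rfl⟩
    exact hnn g
  have hE0 : 0 ≤ E := by
    apply Real.sInf_nonneg
    rintro _ ⟨g, _, rfl⟩
    exact hnn g
  have hne : ((supDist X f) '' (RcSet a1 a2 X)).Nonempty :=
    ⟨_, fun _ => 0, ⟨fun _ => 0, fun _ => 0, by simp, continuousOn_const, continuousOn_const⟩, rfl⟩
  have hcont : ∀ g ∈ RcSet a1 a2 X, ∀ x ∈ X, |f x - g x| ≤ supDist X f g := by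
    rintro g ⟨g1, g2, hg, hc1, hc2⟩ x hx
    have hgc : ContinuousOn g X := (hc1.add hc2).congr hg
    have hcc : ContinuousOn (fun x => |f x - g x|) X := (hf.sub hgc).abs
    refine le_csSup ?_ ⟨x, hx, rfl⟩
    obtain ⟨M, hM⟩ := (hX.image_of_continuousOn hcc).bddAbove
    refine ⟨M, ?_⟩
    rintro _ ⟨y, hy, rfl⟩
    exact hM ⟨y, hy, rfl⟩
  -- the linear map of all coordinates
  have hker : LinearMap.ker (Matrix.mulVecLin (Matrix.of a)) = ⊥ := by
    rw [LinearMap.ker_eq_bot]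
    exact Matrix.mulVec_injective_iff_isUnit.2
      (Matrix.linearIndependent_rows_iff_isUnit.1 hindep)
  obtain ⟨K, hK0, hK⟩ := LinearMap.exists_antilipschitzWith _ hker
  have hK0' : (0 : ℝ) < K := hK0
  let Y₁ : Set ℝ := (fun x => a1 ⬝ᵥ x) '' X
  let Y₂ : Set ℝ := (fun x => a2 ⬝ᵥ x) '' X
  have : CompactSpace X := isCompact_iff_compactSpace.1 hX
  have : CompactSpace Y₁ := isCompact_iff_compactSpace.1 (hX.image (hcd a1))
  have : CompactSpace Y₂ := isCompact_iff_compactSpace.1 (hX.image (hcd a2))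
  let p : X → Y₁ := fun x => ⟨a1 ⬝ᵥ x.1, x.1, x.2, rfl⟩
  let q : X → Y₂ := fun x => ⟨a2 ⬝ᵥ x.1, x.1, x.2, rfl⟩
  have hp : Continuous p := ((hcd a1).comp continuous_subtype_val).subtype_mk _
  have hq : Continuous q := ((hcd a2).comp continuous_subtype_val).subtype_mk _
  have hf' : Continuous (fun x : X => f x.1) := continuousOn_iff_continuous_domRestrict.1 hf
  have huc : UniformContinuous (fun x : X => f x.1) :=
    CompactSpace.uniformContinuous_of_continuous hf'
  obtain ⟨g1, g2, hg⟩ := RidgeProx.main p hp q hq (fun x : X => f x.1) hf' E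
    (by
      rintro ⟨_, x0, hx0, rfl⟩ ε hε V hV
      obtain ⟨ρ, hρ, hρV⟩ := Metric.uniformContinuous_iff.1 huc ε hε
      obtain ⟨η, hη, hηV⟩ := Metric.mem_nhds_iff.1 hV
      have hδ : 0 < min (ρ / (4 * K)) (η / 2) := by positivity
      obtain ⟨δ0, hδ0, hδ0', xσ, hxσ, hall⟩ := hprop x0 hx0 _ hδ
      have hd1 : min (ρ / (4 * K)) (η / 2) ≤ ρ / (4 * K) := min_le_left _ _
      have hd2 : min (ρ / (4 * K)) (η / 2) ≤ η / 2 := min_le_right _ _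
      generalize min (ρ / (4 * K)) (η / 2) = δ at *
      refine ⟨⟨a2 ⬝ᵥ xσ, xσ, hxσ.1, rfl⟩, hηV ?_, ?_⟩
      · rw [Metric.mem_ball, Subtype.dist_eq, Real.dist_eq]
        have := hxσ.2
        simp only
        linarith
      · filter_upwards [Metric.ball_mem_nhds _ hδ0] with y hy x hx
        rw [← hx, Metric.mem_ball, Subtype.dist_eq, Real.dist_eq] at hy
        have hy' : |a2 ⬝ᵥ x.1 - a2 ⬝ᵥ x0| ≤ δ0 := hy.le
        obtain ⟨x', ⟨hx'X, hx'2⟩, e2, e1, e3⟩ := hall x.1 ⟨x.2, hy'⟩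
        refine ⟨⟨x', hx'X⟩, Subtype.ext e2, Subtype.ext e1, ?_⟩
        have hdist : dist (⟨x', hx'X⟩ : X) x < ρ := by
          rw [Subtype.dist_eq]
          have k1 := hK.le_mul_dist x' x.1
          have k2 : dist (Matrix.mulVecLin (Matrix.of a) x') (Matrix.mulVecLin (Matrix.of a) x.1)
              ≤ 2 * δ := by
            rw [dist_pi_le_iff (by linarith)]
            intro i
            rw [Real.dist_eq]
            change |a i ⬝ᵥ x' - a i ⬝ᵥ x.1| ≤ 2 * δ
            by_cases hi : 2 ≤ (i : ℕ)
            · have := Finset.single_le_sum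
                (s := Finset.univ.filter (fun i : Fin n => 2 ≤ (i : ℕ)))
                (f := fun i => |a i ⬝ᵥ x' - a i ⬝ᵥ x.1|) (fun _ _ => abs_nonneg _)
                (Finset.mem_filter.2 ⟨Finset.mem_univ i, hi⟩)
              linarith
            · have h01 : (i : ℕ) = 0 ∨ (i : ℕ) = 1 := by omega
              rcases h01 with h0 | h1
              · have : i = ⟨0, by omega⟩ := Fin.ext h0
                rw [this, ha1, e1, sub_self, abs_zero]
                linarith
              · have : i = ⟨1, by omega⟩ := Fin.ext h1
                rw [this, ha2]
                rw [abs_le] at *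
                constructor <;> linarith [hx'2.1, hx'2.2, hy'.1, hy'.2]
          have k3 : (K : ℝ) * (2 * δ) ≤ ρ / 2 := by
            calc (K : ℝ) * (2 * δ) ≤ K * (2 * (ρ / (4 * K))) := by gcongr
              _ = ρ / 2 := by field_simp; norm_num
          have k4 := mul_le_mul_of_nonneg_left k2 hK0'.le
          linarith
        have := hρV hdist
        rw [Real.dist_eq] at this
        exact this.le)
    (by
      intro ε hε
      obtain ⟨_, ⟨g, hgR, rfl⟩, hlt⟩ := exists_lt_of_csInf_lt hne
        (show sInf ((supDist X f) '' (RcSet a1 a2 X)) < E + ε by rw [← hEdef]; linarith)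
      have hb := hcont g hgR
      obtain ⟨g1, g2, hg, -, -⟩ := hgR
      refine ⟨fun y => g1 y, fun y => g2 y, fun x => ?_⟩
      have h1 := hb x.1 x.2
      rw [hg x.1 x.2] at h1
      exact h1.trans hlt.le)
  let G1 : ℝ → ℝ := fun t => if h : t ∈ Y₁ then g1 ⟨t, h⟩ else 0
  let G2 : ℝ → ℝ := fun t => if h : t ∈ Y₂ then g2 ⟨t, h⟩ else 0
  have hG1 : ∀ x : X, G1 (a1 ⬝ᵥ x.1) = g1 (p x) := fun x => dif_pos (p x).2
  have hG2 : ∀ x : X, G2 (a2 ⬝ᵥ x.1) = g2 (q x) := fun x => dif_pos (q x).2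
  have hmem : (fun x => G1 (a1 ⬝ᵥ x) + G2 (a2 ⬝ᵥ x)) ∈ RcSet a1 a2 X := by
    refine ⟨G1, G2, fun _ _ => rfl, ?_, ?_⟩
    · rw [continuousOn_iff_continuous_domRestrict]
      exact (g1.continuous.comp hp).congr fun x => (hG1 x).symm
    · rw [continuousOn_iff_continuous_domRestrict]
      exact (g2.continuous.comp hq).congr fun x => (hG2 x).symm
  refine ⟨_, hmem, le_antisymm ?_ (csInf_le hbdd ⟨_, hmem, rfl⟩)⟩
  apply Real.sSup_le _ hE0
  rintro _ ⟨x, hx, rfl⟩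
  have := hg ⟨x, hx⟩
  rw [← hG1, ← hG2] at this
  exact this
end

section
/- Let X be a closed ball in ℝ³ and let a¹ and a² be two arbitrary nonzero orthogonal directions in ℝ³. Then R_c(X) is proximinal in C(X). -/
open Matrix Set Filter Topology

/-- Bounded real sequences converge along a hyperfilter. -/
lemma aux_ultra (u : ℕ → ℝ) (B : ℝ) (hu : ∀ n, |u n| ≤ B) :
    ∃ l, Tendsto u (Filter.hyperfilter ℕ : Filter ℕ) (𝓝 l) := by
  have hc : IsCompact (Icc (-B) B) := isCompact_Icc
  obtain ⟨l, _, hl⟩ := hc.ultrafilter_le_nhds ((Filter.hyperfilter ℕ).map u) (by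
    simp only [Ultrafilter.coe_map, le_principal_iff, Filter.mem_map]
    exact Filter.univ_mem' fun n => abs_le.1 (hu n))
  exact ⟨l, hl⟩

/-- Replace one summand by a continuous one. -/
lemma aux_smooth {n : ℕ} (X : Set (Fin n → ℝ)) (hX : IsCompact X) (a1 a2 b : Fin n → ℝ)
    (hb2 : a2 ⬝ᵥ b = 0) (hb1 : a1 ⬝ᵥ b = 1)
    (hshift : ∀ x ∈ X, ∀ y ∈ X, x + (a1 ⬝ᵥ y - a1 ⬝ᵥ x) • b ∈ X ∨
      y + (a1 ⬝ᵥ x - a1 ⬝ᵥ y) • b ∈ X)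
    (f : (Fin n → ℝ) → ℝ) (hf : ContinuousOn f X) (E : ℝ) (g0 h : ℝ → ℝ)
    (hg : ∀ x ∈ X, |f x - (g0 (a1 ⬝ᵥ x) + h (a2 ⬝ᵥ x))| ≤ E) :
    ∃ g : ℝ → ℝ, ContinuousOn (fun x => g (a1 ⬝ᵥ x)) X ∧
      ∀ x ∈ X, |f x - (g (a1 ⬝ᵥ x) + h (a2 ⬝ᵥ x))| ≤ E := by
  rcases X.eq_empty_or_nonempty with rfl | hne
  · exact ⟨0, by simp, by simp⟩
  obtain ⟨F, hF⟩ := ContinuousMap.exists_restrict_eq hX.isClosed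
    (⟨X.domRestrict f, hf.domRestrict⟩ : C(X, ℝ))
  have hFf : ∀ x ∈ X, F x = f x := fun x hx => by
    have := DFunLike.congr_fun hF ⟨x, hx⟩
    exact this
  set w : ℝ → ℝ := fun d => sSup ((fun x => |F (x + d • b) - F x|) '' X) with hw
  have hwc : Continuous w := by
    apply hX.continuous_sSup (f := fun (d : ℝ) x => |F (x + d • b) - F x|)
    simp only [Function.HasUncurry.uncurry, id]
    fun_prop
  have hwle : ∀ d, ∀ x ∈ X, |F (x + d • b) - F x| ≤ w d := by
    intro d x hx
    apply le_csSup
    · exact hX.bddAbove_image (by fun_prop)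
    · exact ⟨x, hx, rfl⟩
  have hw0 : ∀ d, 0 ≤ w d := by
    intro d
    obtain ⟨x, hx⟩ := hne
    exact (abs_nonneg _).trans (hwle d x hx)
  have hwz : w 0 = 0 := by
    simp only [hw, zero_smul, add_zero, sub_self, abs_zero]
    rw [hne.image_const]; simp
  set W : ℝ → ℝ := fun d => w d + w (-d) with hW
  have hWc : Continuous W := by fun_prop
  -- the key inequality
  have key : ∀ x ∈ X, ∀ y ∈ X,
      f x - E - h (a2 ⬝ᵥ x) - W (a1 ⬝ᵥ y - a1 ⬝ᵥ x) ≤ f y + E - h (a2 ⬝ᵥ y) := by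
    intro x hx y hy
    rcases hshift x hx y hy with hs | hs
    · have e1 : a1 ⬝ᵥ (x + (a1 ⬝ᵥ y - a1 ⬝ᵥ x) • b) = a1 ⬝ᵥ y := by
        simp [dotProduct_add, dotProduct_smul, hb1]
      have e2 : a2 ⬝ᵥ (x + (a1 ⬝ᵥ y - a1 ⬝ᵥ x) • b) = a2 ⬝ᵥ x := by
        simp [dotProduct_add, dotProduct_smul, hb2]
      have h1 := hg _ hs
      rw [e1, e2] at h1
      have h2 := hg _ hy
      have h3 := hwle (a1 ⬝ᵥ y - a1 ⬝ᵥ x) x hx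
      rw [hFf _ hs, hFf _ hx] at h3
      have h4 := hw0 (-(a1 ⬝ᵥ y - a1 ⬝ᵥ x))
      rw [abs_le] at h1 h2 h3
      simp only [hW]
      linarith [h1.1, h1.2, h2.1, h2.2, h3.1, h3.2]
    · have e1 : a1 ⬝ᵥ (y + (a1 ⬝ᵥ x - a1 ⬝ᵥ y) • b) = a1 ⬝ᵥ x := by
        simp [dotProduct_add, dotProduct_smul, hb1]
      have e2 : a2 ⬝ᵥ (y + (a1 ⬝ᵥ x - a1 ⬝ᵥ y) • b) = a2 ⬝ᵥ y := by
        simp [dotProduct_add, dotProduct_smul, hb2]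
      have h1 := hg _ hs
      rw [e1, e2] at h1
      have h2 := hg _ hx
      have h3 := hwle (a1 ⬝ᵥ x - a1 ⬝ᵥ y) y hy
      rw [hFf _ hs, hFf _ hy] at h3
      have h4 := hw0 (a1 ⬝ᵥ y - a1 ⬝ᵥ x)
      rw [abs_le] at h1 h2 h3
      simp only [hW, neg_sub]
      linarith [h1.1, h1.2, h2.1, h2.2, h3.1, h3.2]
  set S : ℝ → Set ℝ := fun s => (fun x => f x - E - h (a2 ⬝ᵥ x) - W (s - a1 ⬝ᵥ x)) '' X with hS
  have hSne : ∀ s, (S s).Nonempty := fun s => hne.image _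
  have hSb : ∀ y ∈ X, f y + E - h (a2 ⬝ᵥ y) ∈ upperBounds (S (a1 ⬝ᵥ y)) := by
    rintro y hy _ ⟨x, hx, rfl⟩
    exact key x hx y hy
  refine ⟨fun s => sSup (S s), ?_, ?_⟩
  · -- continuity
    have hK : IsCompact ((fun p : (Fin n → ℝ) × (Fin n → ℝ) => a1 ⬝ᵥ p.1 - a1 ⬝ᵥ p.2) '' (X ×ˢ X)) := by
      apply (hX.prod hX).image
      fun_prop
    have hUC := hK.uniformContinuousOn_of_continuous hWc.continuousOn
    rw [Metric.uniformContinuousOn_iff] at hUC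
    rw [Metric.continuousOn_iff]
    intro y hy ε hε
    obtain ⟨δ, hδ, hδ'⟩ := hUC (ε / 2) (by linarith)
    have hac : Continuous fun x : Fin n → ℝ => a1 ⬝ᵥ x := by fun_prop
    obtain ⟨η, hη, hη'⟩ := Metric.continuous_iff.1 hac y δ hδ
    refine ⟨η, hη, fun z hz hzy => ?_⟩
    have hd := hη' z hzy
    have hWd : ∀ x ∈ X, |W (a1 ⬝ᵥ z - a1 ⬝ᵥ x) - W (a1 ⬝ᵥ y - a1 ⬝ᵥ x)| < ε / 2 := by
      intro x hx
      apply hδ' _ ⟨(z, x), ⟨hz, hx⟩, rfl⟩ _ ⟨(y, x), ⟨hy, hx⟩, rfl⟩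
      rw [Real.dist_eq] at hd ⊢
      simpa using hd
    have h1 : sSup (S (a1 ⬝ᵥ z)) ≤ sSup (S (a1 ⬝ᵥ y)) + ε / 2 := by
      apply csSup_le (hSne _)
      rintro _ ⟨x, hx, rfl⟩
      have := le_csSup ⟨_, hSb y hy⟩ (mem_image_of_mem
        (fun x => f x - E - h (a2 ⬝ᵥ x) - W (a1 ⬝ᵥ y - a1 ⬝ᵥ x)) hx)
      have h2 := abs_lt.1 (hWd x hx)
      simp only at this ⊢
      linarith [h2.1, h2.2]
    have h1' : sSup (S (a1 ⬝ᵥ y)) ≤ sSup (S (a1 ⬝ᵥ z)) + ε / 2 := by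
      apply csSup_le (hSne _)
      rintro _ ⟨x, hx, rfl⟩
      have := le_csSup ⟨_, hSb z hz⟩ (mem_image_of_mem
        (fun x => f x - E - h (a2 ⬝ᵥ x) - W (a1 ⬝ᵥ z - a1 ⬝ᵥ x)) hx)
      have h2 := abs_lt.1 (hWd x hx)
      simp only at this ⊢
      linarith [h2.1, h2.2]
    rw [Real.dist_eq, abs_lt]
    constructor <;> linarith
  · intro y hy
    have h1 : sSup (S (a1 ⬝ᵥ y)) ≤ f y + E - h (a2 ⬝ᵥ y) := csSup_le (hSne _) (hSb y hy)
    have h2 := le_csSup ⟨_, hSb y hy⟩ (mem_image_of_mem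
        (fun x => f x - E - h (a2 ⬝ᵥ x) - W (a1 ⬝ᵥ y - a1 ⬝ᵥ x)) hy)
    simp only [sub_self, hW, neg_zero, hwz, add_zero, sub_zero] at h2
    rw [abs_le]
    simp only [hW] at h1 ⊢
    constructor <;> linarith

/-- Shifting inside the ball. -/
lemma aux_ball (c : Fin 3 → ℝ) (r : ℝ) (a : Fin 3 → ℝ) (ha : a ≠ 0) (x : Fin 3 → ℝ)
    (hx : ∑ i, (x i - c i) ^ 2 ≤ r ^ 2) (q : ℝ)
    (hq : (q - a ⬝ᵥ c) ^ 2 ≤ (a ⬝ᵥ x - a ⬝ᵥ c) ^ 2) :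
    ∑ i, ((x + (q - a ⬝ᵥ x) • ((a ⬝ᵥ a)⁻¹ • a)) i - c i) ^ 2 ≤ r ^ 2 := by
  have hpos : 0 < a ⬝ᵥ a := by
    have h0 : a ⬝ᵥ a ≠ 0 := fun h => ha (dotProduct_self_eq_zero.1 h)
    have h1 : 0 ≤ a ⬝ᵥ a := Finset.sum_nonneg fun i _ => mul_self_nonneg _
    exact lt_of_le_of_ne h1 h0.symm
  refine le_trans ?_ hx
  have key : ∑ i, ((x + (q - a ⬝ᵥ x) • ((a ⬝ᵥ a)⁻¹ • a)) i - c i) ^ 2 =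
      ∑ i, (x i - c i) ^ 2 + ((q - a ⬝ᵥ c) ^ 2 - (a ⬝ᵥ x - a ⬝ᵥ c) ^ 2) * (a ⬝ᵥ a)⁻¹ := by
    obtain ⟨N, hN⟩ : ∃ N, N = a ⬝ᵥ a := ⟨_, rfl⟩
    have hN0 : N ≠ 0 := by rw [hN]; exact hpos.ne'
    obtain ⟨p, hp⟩ : ∃ p, p = a ⬝ᵥ x := ⟨_, rfl⟩
    obtain ⟨k, hk⟩ : ∃ k, k = a ⬝ᵥ c := ⟨_, rfl⟩
    rw [← hN, ← hp, ← hk]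
    simp only [dotProduct, Fin.sum_univ_three] at hN hp hk
    simp only [Fin.sum_univ_three, Pi.add_apply, Pi.smul_apply, smul_eq_mul]
    have hm : N * N⁻¹ = 1 := mul_inv_cancel₀ hN0
    obtain ⟨m, hm'⟩ : ∃ m, m = N⁻¹ := ⟨_, rfl⟩
    rw [← hm'] at hm ⊢
    linear_combination (-2 * (q - p) * m) * (hp - hk) - (q - p) ^ 2 * m ^ 2 * hN
      + (q - p) ^ 2 * m * hm
  rw [key]
  have : ((q - a ⬝ᵥ c) ^ 2 - (a ⬝ᵥ x - a ⬝ᵥ c) ^ 2) * (a ⬝ᵥ a)⁻¹ ≤ 0 :=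
    mul_nonpos_of_nonpos_of_nonneg (by linarith) (by positivity)
  linarith

/-- Example (a): if `X` is a closed (Euclidean) ball in `ℝ³` and
`a¹, a²` are two arbitrary nonzero orthogonal directions, then `R_c(X)` is proximinal
in `C(X)`. -/
theorem proximinality_of_Rc_on_closed_ball
    (center : Fin 3 → ℝ) (r : ℝ) (hr : 0 < r)
    (a1 a2 : Fin 3 → ℝ) (ha1 : a1 ≠ 0) (ha2 : a2 ≠ 0) (horth : a1 ⬝ᵥ a2 = 0)
    (X : Set (Fin 3 → ℝ)) (hXball : X = {x | ∑ i, (x i - center i) ^ 2 ≤ r ^ 2})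
    (f : (Fin 3 → ℝ) → ℝ) (hf : ContinuousOn f X) :
    HasExtremalIn X f (RcSet a1 a2 X) := by
  have hmem : ∀ x, x ∈ X ↔ ∑ i, (x i - center i) ^ 2 ≤ r ^ 2 := by
    intro x; rw [hXball]; rfl
  have hcX : center ∈ X := by rw [hmem]; simp; positivity
  have hX : IsCompact X := by
    apply Metric.isCompact_of_isClosed_isBounded
    · rw [hXball]; exact isClosed_le (by fun_prop) continuous_const
    · apply (Metric.isBounded_closedBall (x := center) (r := r)).subset
      intro x hx
      rw [hmem] at hx
      rw [Metric.mem_closedBall, dist_pi_le_iff hr.le]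
      intro i
      rw [Real.dist_eq]
      apply abs_le_of_sq_le_sq _ hr.le
      exact (Finset.single_le_sum (f := fun i => (x i - center i) ^ 2)
        (fun i _ => sq_nonneg _) (Finset.mem_univ i)).trans hx
  -- shifts
  have hsh : ∀ a : Fin 3 → ℝ, a ≠ 0 → ∀ x ∈ X, ∀ y ∈ X,
      x + (a ⬝ᵥ y - a ⬝ᵥ x) • ((a ⬝ᵥ a)⁻¹ • a) ∈ X ∨
      y + (a ⬝ᵥ x - a ⬝ᵥ y) • ((a ⬝ᵥ a)⁻¹ • a) ∈ X := by
    intro a ha x hx y hy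
    rcases le_total ((a ⬝ᵥ y - a ⬝ᵥ center) ^ 2) ((a ⬝ᵥ x - a ⬝ᵥ center) ^ 2) with h | h
    · left; rw [hmem] at hx ⊢; exact aux_ball center r a ha x hx _ h
    · right; rw [hmem] at hy ⊢; exact aux_ball center r a ha y hy _ h
  have hb : ∀ a : Fin 3 → ℝ, a ≠ 0 → a ⬝ᵥ ((a ⬝ᵥ a)⁻¹ • a) = 1 := by
    intro a ha
    rw [dotProduct_smul, smul_eq_mul]
    exact inv_mul_cancel₀ fun h => ha (dotProduct_self_eq_zero.1 h)
  have horth' : a2 ⬝ᵥ a1 = 0 := by rw [dotProduct_comm]; exact horth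
  have hproj : ∀ x ∈ X, ∃ x' ∈ X, a1 ⬝ᵥ x' = a1 ⬝ᵥ x ∧ a2 ⬝ᵥ x' = a2 ⬝ᵥ center := by
    intro x hx
    refine ⟨x + (a2 ⬝ᵥ center - a2 ⬝ᵥ x) • ((a2 ⬝ᵥ a2)⁻¹ • a2), ?_, ?_, ?_⟩
    · rw [hmem] at hx ⊢
      exact aux_ball center r a2 ha2 x hx _ (by simp; positivity)
    · simp [dotProduct_add, dotProduct_smul, horth]
    · rw [dotProduct_add, dotProduct_smul, hb a2 ha2]; simp
  have hproj' : ∀ x ∈ X, ∃ x' ∈ X, a2 ⬝ᵥ x' = a2 ⬝ᵥ x ∧ a1 ⬝ᵥ x' = a1 ⬝ᵥ center := by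
    intro x hx
    refine ⟨x + (a1 ⬝ᵥ center - a1 ⬝ᵥ x) • ((a1 ⬝ᵥ a1)⁻¹ • a1), ?_, ?_, ?_⟩
    · rw [hmem] at hx ⊢
      exact aux_ball center r a1 ha1 x hx _ (by simp; positivity)
    · simp [dotProduct_add, dotProduct_smul, horth']
    · rw [dotProduct_add, dotProduct_smul, hb a1 ha1]; simp
  -- the distance
  set E := sInf ((supDist X f) '' (RcSet a1 a2 X)) with hE
  have hbelow : BddBelow ((supDist X f) '' (RcSet a1 a2 X)) := by
    refine ⟨0, ?_⟩
    rintro _ ⟨g, _, rfl⟩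
    apply Real.sSup_nonneg
    rintro _ ⟨x, _, rfl⟩
    exact abs_nonneg _
  have hne : ((supDist X f) '' (RcSet a1 a2 X)).Nonempty :=
    ⟨_, (fun _ => 0), ⟨0, 0, by simp, by simpa using continuousOn_const,
      by simpa using continuousOn_const⟩, rfl⟩
  have hle : ∀ g ∈ RcSet a1 a2 X, ∀ x ∈ X, |f x - g x| ≤ supDist X f g := by
    rintro g ⟨g1, g2, hg, hc1, hc2⟩ x hx
    have hgc : ContinuousOn g X := (hc1.add hc2).congr hg
    apply le_csSup
    · obtain ⟨C, hC⟩ := hX.exists_bound_of_continuousOn (hf.sub hgc)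
      refine ⟨C, ?_⟩
      rintro _ ⟨y, hy, rfl⟩
      exact hC y hy
    · exact ⟨x, hx, rfl⟩
  have hseq : ∀ n : ℕ, ∃ g h : ℝ → ℝ, h (a2 ⬝ᵥ center) = 0 ∧
      ∀ x ∈ X, |f x - (g (a1 ⬝ᵥ x) + h (a2 ⬝ᵥ x))| ≤ E + 1 / ((n : ℝ) + 1) := by
    intro n
    obtain ⟨_, ⟨g, hg, rfl⟩, hlt⟩ := exists_lt_of_csInf_lt hne
      (show E < E + 1 / ((n : ℝ) + 1) by
        have : 0 < 1 / ((n : ℝ) + 1) := by positivity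
        linarith)
    obtain ⟨g1, g2, hgs, _, _⟩ := id hg
    refine ⟨fun s => g1 s + g2 (a2 ⬝ᵥ center), fun t => g2 t - g2 (a2 ⬝ᵥ center), by simp, ?_⟩
    intro x hx
    have := (hle g hg x hx).trans hlt.le
    rw [hgs x hx] at this
    have e : g1 (a1 ⬝ᵥ x) + g2 (a2 ⬝ᵥ center) + (g2 (a2 ⬝ᵥ x) - g2 (a2 ⬝ᵥ center)) =
        g1 (a1 ⬝ᵥ x) + g2 (a2 ⬝ᵥ x) := by ring
    simp only [e]
    exact this
  choose G H hH0 hGH using hseq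
  obtain ⟨C, hC⟩ := hX.exists_bound_of_continuousOn hf
  set B := C + E + 1 with hB
  have hsum : ∀ n, ∀ x ∈ X, |G n (a1 ⬝ᵥ x) + H n (a2 ⬝ᵥ x)| ≤ B := by
    intro n x hx
    have h1 := hGH n x hx
    have h2 := hC x hx
    have h3 : 1 / ((n : ℝ) + 1) ≤ 1 := by
      rw [div_le_one (by positivity)]; linarith [(Nat.cast_nonneg n : (0 : ℝ) ≤ n)]
    rw [Real.norm_eq_abs] at h2
    rw [abs_le] at *
    constructor <;> linarith [h1.1, h1.2, h2.1, h2.2]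
  have hGb : ∀ n, ∀ x ∈ X, |G n (a1 ⬝ᵥ x)| ≤ B := by
    intro n x hx
    obtain ⟨x', hx', e1, e2⟩ := hproj x hx
    have := hsum n x' hx'
    rwa [e1, e2, hH0, add_zero] at this
  have hHb : ∀ n, ∀ x ∈ X, |H n (a2 ⬝ᵥ x)| ≤ 2 * B := by
    intro n x hx
    have h1 := hsum n x hx
    have h2 := hGb n x hx
    rw [abs_le] at *
    constructor <;> linarith [h1.1, h1.2, h2.1, h2.2]
  have hlimG : ∀ s : ℝ, ∃ l, (∃ x ∈ X, a1 ⬝ᵥ x = s) →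
      Tendsto (fun n => G n s) (Filter.hyperfilter ℕ : Filter ℕ) (𝓝 l) := by
    intro s
    by_cases hs : ∃ x ∈ X, a1 ⬝ᵥ x = s
    · obtain ⟨x, hx, rfl⟩ := hs
      obtain ⟨l, hl⟩ := aux_ultra (fun n => G n (a1 ⬝ᵥ x)) B fun n => hGb n x hx
      exact ⟨l, fun _ => hl⟩
    · exact ⟨0, fun h => absurd h hs⟩
  have hlimH : ∀ s : ℝ, ∃ l, (∃ x ∈ X, a2 ⬝ᵥ x = s) →
      Tendsto (fun n => H n s) (Filter.hyperfilter ℕ : Filter ℕ) (𝓝 l) := by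
    intro s
    by_cases hs : ∃ x ∈ X, a2 ⬝ᵥ x = s
    · obtain ⟨x, hx, rfl⟩ := hs
      obtain ⟨l, hl⟩ := aux_ultra (fun n => H n (a2 ⬝ᵥ x)) (2 * B) fun n => hHb n x hx
      exact ⟨l, fun _ => hl⟩
    · exact ⟨0, fun h => absurd h hs⟩
  choose g0 hg0 using hlimG
  choose h0 hh0 using hlimH
  have hlim : ∀ x ∈ X, |f x - (g0 (a1 ⬝ᵥ x) + h0 (a2 ⬝ᵥ x))| ≤ E := by
    intro x hx
    have t1 := (((hg0 _ ⟨x, hx, rfl⟩).add (hh0 _ ⟨x, hx, rfl⟩)).const_sub (f x)).abs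
    have t2 : Tendsto (fun n : ℕ => E + 1 / ((n : ℝ) + 1))
        (Filter.hyperfilter ℕ : Filter ℕ) (𝓝 (E + 0)) :=
      (tendsto_const_nhds.add tendsto_one_div_add_atTop_nhds_zero_nat).mono_left
        Nat.hyperfilter_le_atTop
    rw [add_zero] at t2
    exact le_of_tendsto_of_tendsto' t1 t2 fun n => hGH n x hx
  obtain ⟨g, hgc, hg⟩ := aux_smooth X hX a1 a2 _
    (by rw [dotProduct_smul, horth', smul_zero]) (hb a1 ha1) (hsh a1 ha1) f hf E g0 h0 hlim
  obtain ⟨h, hhc, hh⟩ := aux_smooth X hX a2 a1 _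
    (by rw [dotProduct_smul, horth, smul_zero]) (hb a2 ha2) (hsh a2 ha2) f hf E h0 g
    (fun x hx => by rw [add_comm]; exact hg x hx)
  have hR : (fun x => g (a1 ⬝ᵥ x) + h (a2 ⬝ᵥ x)) ∈ RcSet a1 a2 X :=
    ⟨g, h, fun _ _ => rfl, hgc, hhc⟩
  refine ⟨_, hR, le_antisymm ?_ (csInf_le hbelow ⟨_, hR, rfl⟩)⟩
  have hne' : {r | ∃ x ∈ X, r = |f x - (g (a1 ⬝ᵥ x) + h (a2 ⬝ᵥ x))|}.Nonempty :=
    ⟨|f center - (g (a1 ⬝ᵥ center) + h (a2 ⬝ᵥ center))|, center, hcX, rfl⟩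
  refine csSup_le hne' ?_
  rintro _ ⟨x, hx, rfl⟩
  have := hh x hx
  rw [add_comm] at this
  exact this
end

section
/- Let X = [0,1]³ be the unit cube in ℝ³, a¹ = (1, 1, 0) and a² = (1, −1, 0). Then R_c(X) is proximinal in C(X). -/
open Matrix Set Filter Topology

lemma core_cont (F : ℝ → ℝ → ℝ → ℝ) (M E B : ℝ)
    (hF : UniformContinuous (fun p : ℝ × ℝ × ℝ => F p.1 p.2.1 p.2.2))
    (hM : ∀ s t z, |F s t z| ≤ M) (q : ℝ → ℝ) (hB : ∀ t, |t| ≤ 1 → |q t| ≤ B)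
    (hq : ∀ s t t' z z', |s - 1| + |t| ≤ 1 → |s - 1| + |t'| ≤ 1 → z ∈ Icc (0:ℝ) 1 →
      z' ∈ Icc (0:ℝ) 1 → q t' - q t ≤ F s t' z' - F s t z + 2 * E) :
    ∃ g : ℝ → ℝ, Continuous g ∧
     ∀ s t t' z z', |s - 1| + |t| ≤ 1 → |s - 1| + |t'| ≤ 1 → z ∈ Icc (0:ℝ) 1 →
      z' ∈ Icc (0:ℝ) 1 → g t' - g t ≤ F s t' z' - F s t z + 2 * E := by
  classical
  let I := Icc (-1:ℝ) 1 × Icc (-1:ℝ) 1 × Icc (0:ℝ) 1 × Icc (0:ℝ) 1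
  let σ : I → ℝ → ℝ := fun i t' => 1 + (1 - max |(i.1:ℝ)| |t'|) * (i.2.1:ℝ)
  let H : I → ℝ → ℝ := fun i t' =>
    q i.1 + F (σ i t') t' i.2.2.2 - F (σ i t') i.1 i.2.2.1 + 2 * E
  have i0 : I := ⟨⟨0, by simp⟩, ⟨0, by simp⟩, ⟨0, by simp⟩, ⟨0, by simp⟩⟩
  haveI : Nonempty I := ⟨i0⟩
  have hbdd : ∀ t', BddBelow (range fun i => H i t') := by
    intro t'
    refine ⟨-B - M - M + 2 * E, ?_⟩
    rintro _ ⟨i, rfl⟩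
    have h1 := abs_le.1 (hB i.1 (abs_le.2 i.1.2))
    have h2 := abs_le.1 (hM (σ i t') t' i.2.2.2)
    have h3 := abs_le.1 (hM (σ i t') i.1 i.2.2.1)
    simp only [H]
    linarith [h1.1, h2.1, h3.2]
  refine ⟨fun t' => ⨅ i, H i t', ?_, ?_⟩
  · apply UniformContinuous.continuous
    rw [Metric.uniformContinuous_iff] at hF ⊢
    intro ε hε
    obtain ⟨δ, hδ, h⟩ := hF (ε/4) (by positivity)
    refine ⟨δ, hδ, ?_⟩
    have key : ∀ a b : ℝ, dist a b < δ → ∀ i, H i a ≤ H i b + ε / 2 := by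
      intro a b hab i
      have hs : dist (σ i a) (σ i b) < δ := by
        refine lt_of_le_of_lt ?_ hab
        rw [Real.dist_eq, Real.dist_eq]
        have e : σ i a - σ i b = (max |(i.1:ℝ)| |b| - max |(i.1:ℝ)| |a|) * (i.2.1:ℝ) := by
          simp only [σ]; ring
        rw [e, abs_mul]
        have h1 : |(i.2.1:ℝ)| ≤ 1 := abs_le.2 i.2.1.2
        have h2 : abs (max |(i.1:ℝ)| |b| - max |(i.1:ℝ)| |a|) ≤ |a - b| := by
          refine (abs_max_sub_max_le_max _ _ _ _).trans ?_
          simp only [sub_self, abs_zero]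
          refine max_le (abs_nonneg _) ?_
          rw [abs_sub_comm a b]
          exact abs_abs_sub_abs_le b a
        calc _ ≤ abs (max |(i.1:ℝ)| |b| - max |(i.1:ℝ)| |a|) * 1 := by gcongr
          _ ≤ _ := by linarith
      have u1 := @h (σ i a, a, i.2.2.2) (σ i b, b, i.2.2.2) (by
        simp only [Prod.dist_eq, dist_self]
        exact max_lt hs (max_lt hab hδ))
      have u2 := @h (σ i a, i.1, i.2.2.1) (σ i b, i.1, i.2.2.1) (by
        simp only [Prod.dist_eq, dist_self]
        exact max_lt hs hδ)
      rw [Real.dist_eq] at u1 u2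
      have v1 := abs_lt.1 u1
      have v2 := abs_lt.1 u2
      simp only at v1 v2
      simp only [H]
      linarith [v1.2, v2.1]
    have key2 : ∀ a b : ℝ, dist a b < δ → (⨅ i, H i a) ≤ (⨅ i, H i b) + ε / 2 := by
      intro a b hab
      have : (⨅ i, H i a) - ε/2 ≤ ⨅ i, H i b := by
        refine le_ciInf fun i => ?_
        have := ciInf_le (hbdd a) i
        have := key a b hab i
        linarith
      linarith
    intro a b hab
    rw [Real.dist_eq, abs_lt]
    have h1 := key2 a b hab
    have h2 := key2 b a (by rwa [dist_comm])
    constructor <;> linarith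
  · intro s t t' z z' ht ht' hz hz'
    have e1 : q t ≤ ⨅ i, H i t := by
      refine le_ciInf fun i => ?_
      have hi : |(i.1:ℝ)| ≤ 1 := abs_le.2 i.1.2
      have hc : |(i.2.1:ℝ)| ≤ 1 := abs_le.2 i.2.1.2
      have ht1 : |t| ≤ 1 := by linarith [abs_nonneg (s-1)]
      have hm : max |(i.1:ℝ)| |t| ≤ 1 := max_le hi ht1
      have hσ : |σ i t - 1| ≤ 1 - max |(i.1:ℝ)| |t| := by
        simp only [σ, add_sub_cancel_left, abs_mul]
        rw [abs_of_nonneg (by linarith)]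
        exact mul_le_of_le_one_right (by linarith) hc
      have := hq (σ i t) i.1 t i.2.2.1 i.2.2.2 (by linarith [le_max_left |(i.1:ℝ)| |t|])
        (by linarith [le_max_right |(i.1:ℝ)| |t|]) i.2.2.1.2 i.2.2.2.2
      simp only [H]
      linarith
    have ht1 : |t| ≤ 1 := by linarith [abs_nonneg (s-1)]
    have hsm : |s - 1| ≤ 1 - max |t| |t'| := by
      rcases max_cases |t| |t'| with h | h <;> linarith [h.1]
    obtain ⟨c, hc, hsc⟩ : ∃ c : ℝ, |c| ≤ 1 ∧ s = 1 + (1 - max |t| |t'|) * c := by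
      rcases (le_trans (abs_nonneg _) hsm).eq_or_lt with h0 | h0
      · refine ⟨0, by simp, ?_⟩
        rw [← h0] at hsm
        have := abs_eq_zero.1 (le_antisymm hsm (abs_nonneg _))
        linarith
      · refine ⟨(s-1)/(1 - max |t| |t'|), ?_, ?_⟩
        · rw [abs_div, abs_of_pos h0]
          exact (div_le_one h0).2 hsm
        · field_simp
          ring
    have := ciInf_le (hbdd t') (⟨⟨t, abs_le.1 ht1⟩, ⟨c, abs_le.1 hc⟩, ⟨z, hz⟩, ⟨z', hz'⟩⟩ : I)
    simp only [H, σ] at this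
    rw [← hsc] at this
    simp only [H, σ] at e1 ⊢
    linarith

lemma core_pair (F : ℝ → ℝ → ℝ → ℝ) (E : ℝ)
    (hF : Continuous (fun p : ℝ × ℝ × ℝ => F p.1 p.2.1 p.2.2)) (g : ℝ → ℝ) (hg : Continuous g)
    (hq : ∀ s t t' z z', |s - 1| + |t| ≤ 1 → |s - 1| + |t'| ≤ 1 → z ∈ Icc (0:ℝ) 1 →
      z' ∈ Icc (0:ℝ) 1 → g t' - g t ≤ F s t' z' - F s t z + 2 * E) :
    ∃ k : ℝ → ℝ, Continuous k ∧ ∀ s t z, |s - 1| + |t| ≤ 1 → z ∈ Icc (0:ℝ) 1 →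
      |F s t z - (k s + g t)| ≤ E := by
  let K : Set (ℝ × ℝ) := Icc (-1:ℝ) 1 ×ˢ Icc (0:ℝ) 1
  have hK : IsCompact K := isCompact_Icc.prod isCompact_Icc
  let G : ℝ → ℝ × ℝ → ℝ := fun s p => F s ((1 - |s-1|) * p.1) p.2 - g ((1 - |s-1|) * p.1) - E
  have hG : Continuous ↿G := by
    have h1 : Continuous (fun x : ℝ × (ℝ × ℝ) => (x.1, ((1 - |x.1-1|) * x.2.1), x.2.2)) := by
      fun_prop
    have h2 := hF.comp h1
    have h3 : Continuous (fun x : ℝ × (ℝ × ℝ) => g ((1 - |x.1-1|) * x.2.1)) := by fun_prop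
    exact (h2.sub h3).sub continuous_const
  refine ⟨fun s => sSup (G s '' K), hK.continuous_sSup hG, ?_⟩
  intro s t z ht hz
  have hs : |s-1| ≤ 1 := by linarith [abs_nonneg t]
  have hbdd : BddAbove (G s '' K) := by
    refine (hK.image ?_).bddAbove
    exact hG.comp (by fun_prop : Continuous fun p : ℝ × ℝ => (s, p))
  rw [abs_le]
  constructor
  · have : sSup (G s '' K) ≤ F s t z - g t + E := by
      refine csSup_le ⟨_, mem_image_of_mem _ (⟨by simp, by simp⟩ : ((0:ℝ),(0:ℝ)) ∈ K)⟩ ?_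
      rintro _ ⟨⟨c, w⟩, ⟨hc, hw⟩, rfl⟩
      have hc' : |c| ≤ 1 := abs_le.2 hc
      have := hq s ((1 - |s-1|) * c) t w z (by
        rw [abs_mul, abs_of_nonneg (by linarith : 0 ≤ 1 - |s-1|)]
        nlinarith) ht hw hz
      simp only [G]
      linarith
    linarith
  · obtain ⟨c, hc, htc⟩ : ∃ c : ℝ, |c| ≤ 1 ∧ (1 - |s-1|) * c = t := by
      rcases (by linarith : 0 ≤ 1 - |s-1|).eq_or_lt with h0 | h0
      · refine ⟨0, by simp, ?_⟩
        have := abs_eq_zero.1 (le_antisymm (by linarith : |t| ≤ 0) (abs_nonneg _))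
        simp [this]
      · refine ⟨t/(1 - |s-1|), ?_, ?_⟩
        · rw [abs_div, abs_of_pos h0]
          exact (div_le_one h0).2 (by linarith)
        · field_simp
    have := le_csSup hbdd (mem_image_of_mem (G s) (⟨abs_le.1 hc, hz⟩ : (c, z) ∈ K))
    simp only [G, htc] at this
    linarith

noncomputable def cubeClamp (x : Fin 3 → ℝ) : Fin 3 → ℝ := fun i => max 0 (min 1 (x i))

lemma cubeClamp_mem (x : Fin 3 → ℝ) : cubeClamp x ∈ Icc (0 : Fin 3 → ℝ) 1 :=
  ⟨fun i => le_max_left _ _, fun i => max_le zero_le_one (min_le_left _ _)⟩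

lemma cubeClamp_eq {x : Fin 3 → ℝ} (hx : x ∈ Icc (0 : Fin 3 → ℝ) 1) : cubeClamp x = x := by
  ext i
  have h1 := hx.1 i
  have h2 := hx.2 i
  simp only [Pi.zero_apply, Pi.one_apply] at h1 h2
  simp [cubeClamp, min_eq_right h2, max_eq_right h1]

noncomputable def diamondPt (s t z : ℝ) : Fin 3 → ℝ := ![(s + t) / 2, (s - t) / 2, z]

lemma diamondPt_mem {s t z : ℝ} (h : |s - 1| + |t| ≤ 1) (hz : z ∈ Icc (0:ℝ) 1) :
    diamondPt s t z ∈ Icc (0 : Fin 3 → ℝ) 1 := by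
  have a1 := le_abs_self (s-1)
  have a2 := neg_abs_le (s-1)
  have b1 := le_abs_self t
  have b2 := neg_abs_le t
  constructor <;> intro i <;> fin_cases i <;> simp [diamondPt] <;>
    first | linarith | exact hz.1 | exact hz.2

lemma diamond_of_mem {x : Fin 3 → ℝ} (hx : x ∈ Icc (0 : Fin 3 → ℝ) 1) :
    |(x 0 + x 1) - 1| + |x 0 - x 1| ≤ 1 ∧ x 2 ∈ Icc (0:ℝ) 1 := by
  have h1 := hx.1
  have h2 := hx.2
  have h10 := h1 0
  have h11 := h1 1
  have h20 := h2 0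
  have h21 := h2 1
  simp only [Pi.zero_apply, Pi.one_apply] at h10 h11 h20 h21
  refine ⟨?_, h1 2, h2 2⟩
  rcases abs_cases ((x 0 + x 1) - 1) with h | h <;> rcases abs_cases (x 0 - x 1) with h' | h' <;>
    rw [h.1, h'.1] <;> linarith

lemma diamondPt_eq (x : Fin 3 → ℝ) : diamondPt (x 0 + x 1) (x 0 - x 1) (x 2) = x := by
  ext i
  fin_cases i <;> simp [diamondPt] <;> ring

lemma dot1 (x : Fin 3 → ℝ) : ![(1 : ℝ), 1, 0] ⬝ᵥ x = x 0 + x 1 := by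
  simp [dotProduct, Fin.sum_univ_three]

lemma dot2 (x : Fin 3 → ℝ) : ![(1 : ℝ), -1, 0] ⬝ᵥ x = x 0 - x 1 := by
  simp [dotProduct, Fin.sum_univ_three]; ring

lemma diamond_uc (f : (Fin 3 → ℝ) → ℝ) (hf : ContinuousOn f (Icc (0 : Fin 3 → ℝ) 1)) :
    UniformContinuous (fun p : ℝ × ℝ × ℝ => f (cubeClamp (diamondPt p.1 p.2.1 p.2.2))) := by
  have hu := isCompact_Icc.uniformContinuousOn_of_continuous hf
  rw [Metric.uniformContinuousOn_iff] at hu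
  rw [Metric.uniformContinuous_iff]
  intro ε hε
  obtain ⟨δ, hδ, h⟩ := hu ε hε
  refine ⟨δ, hδ, ?_⟩
  rintro ⟨s, t, z⟩ ⟨s', t', z'⟩ hd
  refine h _ (cubeClamp_mem _) _ (cubeClamp_mem _) ?_
  simp only [Prod.dist_eq, max_lt_iff, Real.dist_eq] at hd
  obtain ⟨h1, h2, h3⟩ := hd
  have hcl : ∀ a b : ℝ, |max 0 (min 1 a) - max 0 (min 1 b)| ≤ |a - b| := by
    intro a b
    refine (abs_max_sub_max_le_max _ _ _ _).trans (max_le (by simp) ?_)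
    refine (abs_min_sub_min_le_max _ _ _ _).trans (max_le (by simp) le_rfl)
  rw [dist_pi_lt_iff hδ]
  intro i
  rw [Real.dist_eq]
  refine (hcl _ _).trans_lt ?_
  rw [abs_lt] at h1 h2 h3 ⊢
  fin_cases i <;> simp [diamondPt] <;> constructor <;> linarith

/-- Example (b): for the unit cube `X = [0,1]³`, `a¹ = (1,1,0)`
and `a² = (1,−1,0)`, the space `R_c(X)` is proximinal in `C(X)`. -/
theorem proximinality_of_Rc_on_unit_cube
    (f : (Fin 3 → ℝ) → ℝ) (hf : ContinuousOn f (Set.Icc (0 : Fin 3 → ℝ) 1)) :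
    HasExtremalIn (Set.Icc (0 : Fin 3 → ℝ) 1) f
      (RcSet ![(1 : ℝ), 1, 0] ![(1 : ℝ), -1, 0] (Set.Icc (0 : Fin 3 → ℝ) 1)) := by
  set X := Icc (0 : Fin 3 → ℝ) 1 with hX
  set S := RcSet ![(1 : ℝ), 1, 0] ![(1 : ℝ), -1, 0] X with hS
  have hXc : IsCompact X := isCompact_Icc
  have hX0 : (0 : Fin 3 → ℝ) ∈ X := ⟨le_rfl, zero_le_one⟩
  set E := sInf ((supDist X f) '' S) with hE
  have hS0 : (fun _ => 0 : (Fin 3 → ℝ) → ℝ) ∈ S :=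
    ⟨fun _ => 0, fun _ => 0, by simp, continuousOn_const, continuousOn_const⟩
  have hnn : ∀ g, 0 ≤ supDist X f g := by
    intro g
    apply Real.sSup_nonneg
    rintro _ ⟨x, _, rfl⟩
    exact abs_nonneg _
  have hbelow : BddBelow ((supDist X f) '' S) := by
    refine ⟨0, ?_⟩
    rintro _ ⟨g, _, rfl⟩
    exact hnn g
  obtain ⟨M, hM⟩ := hXc.exists_bound_of_continuousOn hf
  let F : ℝ → ℝ → ℝ → ℝ := fun s t z => f (cubeClamp (diamondPt s t z))
  have hFM : ∀ s t z, |F s t z| ≤ M := fun s t z => hM _ (cubeClamp_mem _)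
  have hFeq : ∀ s t z, |s - 1| + |t| ≤ 1 → z ∈ Icc (0:ℝ) 1 → F s t z = f (diamondPt s t z) := by
    intro s t z h hz
    simp only [F, cubeClamp_eq (diamondPt_mem h hz)]
  -- near-optimal approximants
  have step : ∀ n : ℕ, ∃ q : ℝ → ℝ, q 0 = 0 ∧
      ∀ s t t' z z', |s - 1| + |t| ≤ 1 → |s - 1| + |t'| ≤ 1 → z ∈ Icc (0:ℝ) 1 →
      z' ∈ Icc (0:ℝ) 1 → q t' - q t ≤ F s t' z' - F s t z + 2 * (E + 1 / ((n:ℝ) + 1)) := by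
    intro n
    have hpos : (0:ℝ) < 1 / ((n:ℝ) + 1) := by positivity
    obtain ⟨_, ⟨g, ⟨g1, g2, hg, hc1, hc2⟩, rfl⟩, hlt⟩ :=
      exists_lt_of_csInf_lt (⟨_, mem_image_of_mem _ hS0⟩ : ((supDist X f) '' S).Nonempty)
        (by linarith : sInf ((supDist X f) '' S) < E + 1 / ((n:ℝ) + 1))
    have hgc : ContinuousOn g X := (hc1.add hc2).congr hg
    have hb : BddAbove {r | ∃ x ∈ X, r = |f x - g x|} := by
      obtain ⟨C, hC⟩ := hXc.exists_bound_of_continuousOn (hf.sub hgc)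
      refine ⟨C, ?_⟩
      rintro _ ⟨x, hx, rfl⟩
      exact hC x hx
    have hle : ∀ x ∈ X, |f x - g x| ≤ E + 1 / ((n:ℝ) + 1) := fun x hx =>
      (le_csSup hb ⟨x, hx, rfl⟩).trans hlt.le
    have hle2 : ∀ s t z, |s - 1| + |t| ≤ 1 → z ∈ Icc (0:ℝ) 1 →
        |F s t z - (g1 s + g2 t)| ≤ E + 1 / ((n:ℝ) + 1) := by
      intro s t z h hz
      have hm := diamondPt_mem h hz
      have := hle _ hm
      rw [hg _ hm, dot1, dot2] at this
      rw [hFeq s t z h hz]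
      have e1 : diamondPt s t z 0 + diamondPt s t z 1 = s := by simp [diamondPt]; ring
      have e2 : diamondPt s t z 0 - diamondPt s t z 1 = t := by simp [diamondPt]; ring
      rwa [e1, e2] at this
    refine ⟨fun t => g2 t - g2 0, by simp, ?_⟩
    intro s t t' z z' ht ht' hz hz'
    have h1 := abs_le.1 (hle2 s t z ht hz)
    have h2 := abs_le.1 (hle2 s t' z' ht' hz')
    simp only
    linarith [h1.2, h2.1]
  choose q hq0 hq using step
  set B := 2 * M + 2 * (E + 1) with hBdef
  have hqB : ∀ t, |t| ≤ 1 → ∀ n, q n t ∈ Icc (-B) B := by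
    intro t ht n
    have hn : (1:ℝ) / ((n:ℝ) + 1) ≤ 1 := by
      rw [div_le_one (by positivity)]
      linarith [(Nat.cast_nonneg n : (0:ℝ) ≤ n)]
    have z0 : (0:ℝ) ∈ Icc (0:ℝ) 1 := by simp
    have h1 := hq n 1 0 t 0 0 (by simp) (by simpa using ht) z0 z0
    have h2 := hq n 1 t 0 0 0 (by simpa using ht) (by simp) z0 z0
    rw [hq0] at h1 h2
    have m1 := abs_le.1 (hFM 1 0 0)
    have m2 := abs_le.1 (hFM 1 t 0)
    constructor <;> linarith [m1.1, m1.2, m2.1, m2.2]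
  let U : Ultrafilter ℕ := hyperfilter ℕ
  have hlim : ∀ t : ℝ, ∃ l : ℝ, |t| ≤ 1 → l ∈ Icc (-B) B ∧ Tendsto (fun n => q n t) U (𝓝 l) := by
    intro t
    by_cases ht : |t| ≤ 1
    · obtain ⟨l, hl, hl2⟩ := (isCompact_Icc (a := -B) (b := B)).ultrafilter_le_nhds
        (U.map fun n => q n t) (by
          rw [le_principal_iff]
          exact Filter.mem_map.2 (Filter.univ_mem' (hqB t ht)))
      exact ⟨l, fun _ => ⟨hl, hl2⟩⟩
    · exact ⟨0, fun h => absurd h ht⟩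
  choose Q hQ using hlim
  have hU : (U : Filter ℕ) ≤ atTop := by
    rw [← Nat.cofinite_eq_atTop]; exact hyperfilter_le_cofinite
  have hQq : ∀ s t t' z z', |s - 1| + |t| ≤ 1 → |s - 1| + |t'| ≤ 1 → z ∈ Icc (0:ℝ) 1 →
      z' ∈ Icc (0:ℝ) 1 → Q t' - Q t ≤ F s t' z' - F s t z + 2 * E := by
    intro s t t' z z' ht ht' hz hz'
    have l1 := (hQ t (by linarith [abs_nonneg (s-1)])).2
    have l2 := (hQ t' (by linarith [abs_nonneg (s-1)])).2
    have l3 : Tendsto (fun n : ℕ => F s t' z' - F s t z + 2 * (E + 1 / ((n:ℝ) + 1))) U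
        (𝓝 (F s t' z' - F s t z + 2 * (E + 0))) :=
      ((((tendsto_one_div_add_atTop_nhds_zero_nat (𝕜 := ℝ)).mono_left hU).const_add
        E).const_mul 2).const_add _
    rw [add_zero] at l3
    exact le_of_tendsto_of_tendsto' (l2.sub l1) l3 fun n => hq n s t t' z z' ht ht' hz hz'
  have hFu : UniformContinuous (fun p : ℝ × ℝ × ℝ => F p.1 p.2.1 p.2.2) := diamond_uc f hf
  obtain ⟨g, hgc, hg⟩ := core_cont F M E B hFu hFM Q
    (fun t ht => abs_le.2 (hQ t ht).1) hQq
  obtain ⟨k, hkc, hk⟩ := core_pair F E hFu.continuous g hgc hg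
  have hmem : (fun x => k (![(1 : ℝ), 1, 0] ⬝ᵥ x) + g (![(1 : ℝ), -1, 0] ⬝ᵥ x)) ∈ S := by
    refine ⟨k, g, fun _ _ => rfl, ?_, ?_⟩
    · simp only [dot1]
      exact Continuous.continuousOn (by fun_prop)
    · simp only [dot2]
      exact Continuous.continuousOn (by fun_prop)
  refine ⟨_, hmem, le_antisymm ?_ (csInf_le hbelow (mem_image_of_mem _ hmem))⟩
  refine csSup_le ⟨_, 0, hX0, rfl⟩ ?_
  rintro _ ⟨x, hx, rfl⟩
  obtain ⟨d1, d2⟩ := diamond_of_mem hx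
  have := hk _ _ _ d1 d2
  rw [hFeq _ _ _ d1 d2, diamondPt_eq] at this
  simpa only [dot1, dot2] using this
end
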